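/- arXiv:1708.01457 — 3 statements merged into one kernel-verified Lean document; each statement's English description precedes it below -/
import Mathlib

section
/- For every convex polygon with m + 3 vertices, there exists a straight-line planar embedding of the path graph P on m + 1 nodes (with m edges) such that each node of the path is mapped to a distinct vertex of the polygon and every edge of the path is a diagonal of the polygon (i.e., no path edge coincides with a polygon edge), and no two path edges cross except at shared endpoints. -/
open Set Function

/-- Points in the plane. -/
abbrev Pt : Type := ℝ × ℝ

/-- The closed straight-line segment between two points. -/
def seg (a b : Pt) : Set Pt := segment ℝ a b

/-- Two vertex indices of an `n`-gon are adjacent (consecutive in the cyclic order). -/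
def adjV {n : ℕ} [NeZero n] (i j : Fin n) : Prop := j = i + 1 ∨ i = j + 1

/-- The `i`-th boundary edge of the polygon with vertices `p`. -/
def edgeSeg {n : ℕ} [NeZero n] (p : Fin n → Pt) (i : Fin n) : Set Pt := seg (p i) (p (i + 1))

/-- Two segments are non-crossing: they meet at most in shared endpoints. -/
def NC (a b c d : Pt) : Prop := seg a b ∩ seg c d ⊆ ({a, b} ∩ {c, d} : Set Pt)

/-- A simple polygon: at least 3 distinct vertices, and boundary edges meet only at
shared endpoints. -/
def IsSimplePolygon {n : ℕ} [NeZero n] (p : Fin n → Pt) : Prop :=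
  3 ≤ n ∧ Function.Injective p ∧
    ∀ i j : Fin n, i ≠ j →
      edgeSeg p i ∩ edgeSeg p j ⊆ ({p i, p (i + 1)} ∩ {p j, p (j + 1)} : Set Pt)

/-- A convex polygon: a simple polygon whose vertices are in convex position. -/
def IsConvexPolygon {n : ℕ} [NeZero n] (p : Fin n → Pt) : Prop :=
  IsSimplePolygon p ∧ ConvexIndependent ℝ p

/-- `K` is the closed region bounded by the polygon `p`. -/
def IsRegionOf {n : ℕ} [NeZero n] (p : Fin n → Pt) (K : Set Pt) : Prop :=
  IsCompact K ∧ closure (interior K) = K ∧ frontier K = ⋃ i, edgeSeg p i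

/-- Vertex `a` and vertex `b` are visible from each other: the segment joining them does not
cross the polygon boundary (it meets each boundary edge only in shared endpoints). -/
def Visible {n : ℕ} [NeZero n] (p : Fin n → Pt) (a b : Fin n) : Prop :=
  ∀ i : Fin n, seg (p a) (p b) ∩ edgeSeg p i ⊆ ({p a, p b} ∩ {p i, p (i + 1)} : Set Pt)

/-- Cross product of `b - a` and `c - a`. -/
def cross2 (a b c : Pt) : ℝ := (b.1 - a.1) * (c.2 - a.2) - (b.2 - a.2) * (c.1 - a.1)

/-- The vertices are listed counterclockwise (positive signed area). -/
def IsCCW {n : ℕ} [NeZero n] (p : Fin n → Pt) : Prop :=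
  0 < ∑ i : Fin n, ((p i).1 * (p (i + 1)).2 - (p (i + 1)).1 * (p i).2)

/-- Vertex `i` of a counterclockwise polygon is reflex (interior angle greater than `π`). -/
def IsReflex {n : ℕ} [NeZero n] (p : Fin n → Pt) (i : Fin n) : Prop :=
  cross2 (p (i - 1)) (p i) (p (i + 1)) < 0

/-- A pseudo-convex polygon: a simple (counterclockwise) polygon with no two consecutive
reflex vertices. -/
def IsPseudoConvex {n : ℕ} [NeZero n] (p : Fin n → Pt) : Prop :=
  IsSimplePolygon p ∧ IsCCW p ∧ ∀ i : Fin n, ¬ (IsReflex p i ∧ IsReflex p (i + 1))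

/-- The set of vertices visible from `i`, together with `i` and its two boundary neighbours. -/
def visSet {n : ℕ} [NeZero n] (p : Fin n → Pt) (i : Fin n) : Set (Fin n) :=
  {j | Visible p i j ∨ j = i - 1 ∨ j = i ∨ j = i + 1}

/-- Vertex `i` is isolated: it sees fewer than five vertices (counting itself and its two
neighbours), or exactly five and the two visible non-neighbours are adjacent to each other. -/
def IsIsolated {n : ℕ} [NeZero n] (p : Fin n → Pt) (i : Fin n) : Prop :=
  (visSet p i).ncard < 5 ∨
  ((visSet p i).ncard = 5 ∧
    ∀ u ∈ visSet p i, ∀ w ∈ visSet p i,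
      u ∉ ({i - 1, i, i + 1} : Set (Fin n)) → w ∉ ({i - 1, i, i + 1} : Set (Fin n)) →
      u ≠ w → adjV u w)

/-- A straight-line planar polygon embedding of the cycle graph on `m` nodes into the polygon
`p` with bounded region `K`: nodes map injectively to polygon vertices, every cycle edge is a
diagonal of the polygon (endpoints non-adjacent, hence not a polygon edge) lying inside `K`,
distinct cycle edges meet at most in shared endpoints, and cycle edges meet boundary edges at
most in shared endpoints. -/
def IsCycleEmbedding {n m : ℕ} [NeZero n] [NeZero m] (p : Fin n → Pt) (K : Set Pt)
    (f : Fin m → Fin n) : Prop :=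
  Function.Injective f ∧
  (∀ k : Fin m, ¬ adjV (f k) (f (k + 1))) ∧
  (∀ k : Fin m, seg (p (f k)) (p (f (k + 1))) ⊆ K) ∧
  (∀ k l : Fin m, ({p (f k), p (f (k + 1))} : Set Pt) ≠ ({p (f l), p (f (l + 1))} : Set Pt) →
    NC (p (f k)) (p (f (k + 1))) (p (f l)) (p (f (l + 1)))) ∧
  (∀ k : Fin m, ∀ i : Fin n,
    seg (p (f k)) (p (f (k + 1))) ∩ edgeSeg p i ⊆
      ({p (f k), p (f (k + 1))} ∩ {p i, p (i + 1)} : Set Pt))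

/-! In a plane, four points in convex position satisfy a duality: `C` and `D` lie strictly on the
same side of the line `AB` if and only if the segments `AB` and `CD` are disjoint, a condition
symmetric in the two pairs. Since a polygon edge misses every non-incident edge, walking along the
boundary shows that all other vertices lie on one side of it; by duality no chord meets a
non-incident edge. The same walk, now along the vertices between the ends `a` and `b` of a chord,
shows that they all lie on one side of it, so by duality again a chord nested strictly inside
`ab` misses it. The edges of the zig-zag path are chords over strictly nested index intervals. -/

section Plane

variable {𝕜 E ι : Type*} [Field 𝕜]

lemma isCoatom_of_finrank_add_one_eq [AddCommGroup E] [Module 𝕜 E] {W : Submodule 𝕜 E}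
    (hW : Module.finrank 𝕜 W + 1 = Module.finrank 𝕜 E) : IsCoatom W := by
  have : FiniteDimensional 𝕜 E := Module.finite_of_finrank_eq_succ hW.symm
  refine ⟨?_, fun U hU => Submodule.eq_top_of_finrank_eq ?_⟩
  · rintro rfl
    simp at hW
  · have hlt := Submodule.finrank_lt_finrank_of_lt hU
    have hle := U.finrank_le
    omega

lemma isCoatom_direction_line [AddCommGroup E] [Module 𝕜 E] (hE : Module.finrank 𝕜 E = 2)
    {A B : E} (hAB : A ≠ B) : IsCoatom (line[𝕜, A, B]).direction := by
  apply isCoatom_of_finrank_add_one_eq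
  rw [direction_affineSpan, vectorSpan_pair, finrank_span_singleton (vsub_ne_zero.2 hAB), hE]

lemma notMem_segment_of_mem_convexHull_image [LinearOrder 𝕜] [AddCommGroup E] [Module 𝕜 E]
    {p : ι → E} {i j : ι} (hp : ConvexIndependent 𝕜 p) {s : Set ι} {X : E}
    (hij : i ≠ j) (hi : i ∉ s) (hX : X ∈ convexHull 𝕜 (p '' s)) : p i ∉ segment 𝕜 (p j) X := by
  intro h
  have hmem : p i ∈ convexHull 𝕜 (p '' insert j s) :=
    (convex_convexHull 𝕜 _).segment_subset
      (subset_convexHull 𝕜 _ (mem_image_of_mem p (mem_insert j s)))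
      (convexHull_mono (image_mono (subset_insert j s)) hX) h
  exact (hp _ i hmem).elim hij hi

variable [LinearOrder 𝕜] [IsStrictOrderedRing 𝕜]

lemma sSameSide_or_sOppSide_of_isCoatom {P : Type*} [AddCommGroup E] [Module 𝕜 E] [AddTorsor E P]
    {s : AffineSubspace 𝕜 P} (hs : IsCoatom s.direction) (hne : (s : Set P).Nonempty) {x y : P}
    (hx : x ∉ s) (hy : y ∉ s) : s.SSameSide x y ∨ s.SOppSide x y := by
  obtain ⟨p, hp⟩ := hne
  have hxp : x -ᵥ p ∉ s.direction := by rwa [AffineSubspace.vsub_right_mem_direction_iff_mem hp]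
  have hcompl := Submodule.isCompl_span_singleton_of_isCoatom_of_notMem hs hxp
  have hyp : y -ᵥ p ∈ s.direction ⊔ Submodule.span 𝕜 {x -ᵥ p} := by
    rw [hcompl.sup_eq_top]
    exact Submodule.mem_top
  obtain ⟨v, hv, w, hw, hvw⟩ := Submodule.mem_sup.1 hyp
  obtain ⟨t, rfl⟩ := Submodule.mem_span_singleton.1 hw
  have hp' : v +ᵥ p ∈ s := AffineSubspace.vadd_mem_of_mem_direction hv hp
  obtain rfl : y = t • (x -ᵥ p) +ᵥ (v +ᵥ p) := by
    rw [vadd_vadd, add_comm, hvw, vsub_vadd]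
  rcases lt_trichotomy t 0 with ht | rfl | ht
  · exact .inr (AffineSubspace.sOppSide_smul_vsub_vadd_right hx hp hp' ht)
  · exact absurd (by simpa using hp') hy
  · exact .inl (AffineSubspace.sSameSide_smul_vsub_vadd_right hx hp hp' ht)

variable [AddCommGroup E] [Module 𝕜 E]

lemma segment_inter_segment_subset_of_notMem_line {A B C : E} (hC : C ∉ line[𝕜, A, B]) :
    segment 𝕜 A B ∩ segment 𝕜 A C ⊆ {A} := by
  rintro X ⟨hXB, hXC⟩
  by_contra hXA
  rw [mem_segment_iff_wbtw] at hXB hXC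
  have hC' : C ∈ line[𝕜, A, X] := hXC.right_mem_affineSpan_of_left_ne (Ne.symm hXA)
  exact hC (affineSpan_pair_le_of_right_mem hXB.mem_affineSpan hC')

lemma disjoint_segment_of_sSameSide {A B C D : E} (h : line[𝕜, A, B].SSameSide C D) :
    Disjoint (segment 𝕜 A B) (segment 𝕜 C D) := by
  refine Set.disjoint_left.2 fun X hXAB hXCD => h.not_wOppSide ?_
  rw [mem_segment_iff_wbtw] at hXAB hXCD
  exact AffineSubspace.wOppSide_iff_exists_wbtw.2 ⟨X, hXAB.mem_affineSpan, hXCD⟩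

variable {p : ι → E} {i j k l : ι}

lemma mem_segment_of_mem_line_of_mem_convexHull (hp : ConvexIndependent 𝕜 p) {s : Set ι} {X : E}
    (hij : i ≠ j) (hi : i ∉ s) (hj : j ∉ s) (hX : X ∈ convexHull 𝕜 (p '' s))
    (hXline : X ∈ line[𝕜, p i, p j]) : X ∈ segment 𝕜 (p i) (p j) := by
  have hcol := collinear_insert_of_mem_affineSpan_pair hXline
  rcases hcol.wbtw_or_wbtw_or_wbtw with h | h | h <;> rw [← mem_segment_iff_wbtw] at h
  · rw [segment_symm] at h
    exact absurd h (notMem_segment_of_mem_convexHull_image hp hij hi hX)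
  · exact absurd h (notMem_segment_of_mem_convexHull_image hp hij.symm hj hX)
  · rwa [segment_symm]

lemma notMem_line_of_convexIndependent (hp : ConvexIndependent 𝕜 p) (hij : i ≠ j) (hki : k ≠ i)
    (hkj : k ≠ j) : p k ∉ line[𝕜, p i, p j] := by
  intro h
  have hseg : p k ∈ segment 𝕜 (p i) (p j) :=
    mem_segment_of_mem_line_of_mem_convexHull hp (s := {k}) hij hki.symm hkj.symm (by simp) h
  exact notMem_segment_of_mem_convexHull_image hp (s := {j}) hki hkj (by simp) hseg

lemma sSameSide_line_iff_disjoint_segment (hE : Module.finrank 𝕜 E = 2)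
    (hp : ConvexIndependent 𝕜 p) (hij : i ≠ j) (hki : k ≠ i) (hkj : k ≠ j) (hli : l ≠ i)
    (hlj : l ≠ j) :
    line[𝕜, p i, p j].SSameSide (p k) (p l) ↔
      Disjoint (segment 𝕜 (p i) (p j)) (segment 𝕜 (p k) (p l)) := by
  refine ⟨disjoint_segment_of_sSameSide, fun hdisj => ?_⟩
  refine (sSameSide_or_sOppSide_of_isCoatom
    (isCoatom_direction_line hE (hp.injective.ne hij)) ⟨_, left_mem_affineSpan_pair ..⟩
    (notMem_line_of_convexIndependent hp hij hki hkj)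
    (notMem_line_of_convexIndependent hp hij hli hlj)).resolve_right fun hopp => ?_
  obtain ⟨X, hXline, hX⟩ := AffineSubspace.wOppSide_iff_exists_wbtw.1 hopp.wOppSide
  rw [← mem_segment_iff_wbtw] at hX
  have hXhull : X ∈ convexHull 𝕜 (p '' {k, l}) := by rwa [image_pair, convexHull_pair]
  exact Set.disjoint_left.1 hdisj (mem_segment_of_mem_line_of_mem_convexHull hp hij
    (by simp [hki.symm, hli.symm]) (by simp [hkj.symm, hlj.symm]) hXhull hXline) hX

end Plane

lemma rel_of_forall_castSucc_succ {n : ℕ} {r : Fin (n + 1) → Fin (n + 1) → Prop} [IsTrans _ r]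
    {a b : Fin (n + 1)} (hab : a < b)
    (h : ∀ i : Fin n, a ≤ i.castSucc → i.succ ≤ b → r i.castSucc i.succ) : r a b := by
  rw [← Relation.transGen_eq_self (r := r)]
  refine transGen_of_succ_of_lt r (fun i hi => ?_) hab
  obtain ⟨i, rfl⟩ := Fin.exists_castSucc_eq.2 (Fin.ne_last_of_lt hi.2)
  rw [Fin.orderSucc_castSucc]
  exact h i hi.1 (Fin.castSucc_lt_iff_succ_le.1 hi.2)

lemma edgeSeg_castSucc {n : ℕ} (q : Fin (n + 1) → Pt) (i : Fin n) :
    edgeSeg q i.castSucc = seg (q i.castSucc) (q i.succ) := by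
  rw [edgeSeg, Fin.coeSucc_eq_succ]

lemma val_eq_of_adjV {n : ℕ} {i j : Fin (n + 1)} (h : adjV i j) :
    (j : ℕ) = i + 1 ∨ (i : ℕ) = j + 1 ∨ (i = Fin.last n ∧ j = 0) ∨ (j = Fin.last n ∧ i = 0) := by
  rcases h with rfl | rfl <;> rw [Fin.val_add_one] <;> split_ifs with hlast <;> simp [hlast]

namespace NC

variable {a b c d : Pt}

lemma symm (h : NC a b c d) : NC c d a b := by
  rwa [NC, inter_comm, inter_comm {c, d}]

lemma swap_left (h : NC a b c d) : NC b a c d := by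
  rwa [NC, seg, segment_symm, pair_comm]

lemma swap_right (h : NC a b c d) : NC a b d c :=
  h.symm.swap_left.symm

lemma of_disjoint (h : Disjoint (seg a b) (seg c d)) : NC a b c d := by
  simp [NC, h.inter_eq]

lemma of_notMem_line (h : c ∉ line[ℝ, a, b]) : NC a b a c :=
  (segment_inter_segment_subset_of_notMem_line h).trans (by simp)

end NC

lemma finrank_pt : Module.finrank ℝ Pt = 2 := by simp

lemma IsSimplePolygon.disjoint_edgeSeg {n : ℕ} [NeZero n] {q : Fin n → Pt} (hq : IsSimplePolygon q)
    {i j : Fin n} (hij : i ≠ j) (hij' : i + 1 ≠ j) (hji : j + 1 ≠ i) :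
    Disjoint (edgeSeg q i) (edgeSeg q j) := by
  obtain ⟨-, hinj, hedge⟩ := hq
  rw [Set.disjoint_iff]
  refine (hedge i j hij).trans ?_
  rintro _ ⟨rfl | rfl, h | h⟩ <;> have h := hinj h <;> simp_all

lemma sSameSide_chord_of_disjoint_edgeSeg {n : ℕ} {q : Fin (n + 1) → Pt}
    (hq : ConvexIndependent ℝ q) {a b c d : Fin (n + 1)} (hac : a < c) (hcd : c < d) (hdb : d < b)
    (h : ∀ i : Fin n, a < i.castSucc → i.succ < b →
      Disjoint (seg (q a) (q b)) (edgeSeg q i.castSucc)) :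
    line[ℝ, q a, q b].SSameSide (q c) (q d) := by
  have : IsTrans (Fin (n + 1)) fun i j => line[ℝ, q a, q b].SSameSide (q i) (q j) :=
    ⟨fun _ _ _ => AffineSubspace.SSameSide.trans⟩
  refine rel_of_forall_castSucc_succ
    (r := fun i j => line[ℝ, q a, q b].SSameSide (q i) (q j)) hcd fun i hi hi' => ?_
  have hai : a < i.castSucc := hac.trans_le hi
  have hib : i.succ < b := hi'.trans_lt hdb
  have hlt : i.castSucc < i.succ := i.castSucc_lt_succ
  refine (sSameSide_line_iff_disjoint_segment finrank_pt hq (hai.trans (hlt.trans hib)).ne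
    hai.ne' (hlt.trans hib).ne (hai.trans hlt).ne' hib.ne).2 ?_
  have hdisj := h i hai hib
  rwa [edgeSeg_castSucc] at hdisj

lemma nc_of_common_endpoint {ι : Type*} {q : ι → Pt} (hq : ConvexIndependent ℝ q) {a b c : ι}
    (hab : a ≠ b) (hca : c ≠ a) (hcb : c ≠ b) : NC (q a) (q b) (q a) (q c) :=
  .of_notMem_line (notMem_line_of_convexIndependent hq hab hca hcb)

lemma IsConvexPolygon.rotate {n : ℕ} [NeZero n] {q : Fin n → Pt} (hq : IsConvexPolygon q)
    (r : Fin n) : IsConvexPolygon fun i => q (i + r) := by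
  obtain ⟨⟨hn, hinj, hedge⟩, hconv⟩ := hq
  refine ⟨⟨hn, hinj.comp (add_left_injective r), fun i j hij => ?_⟩,
    hconv.comp_embedding (addRightEmbedding r)⟩
  simpa only [edgeSeg, add_right_comm _ 1 r] using
    hedge (i + r) (j + r) ((add_left_injective r).ne hij)

namespace IsConvexPolygon

variable {n : ℕ} {q : Fin (n + 1) → Pt}

lemma sSameSide_last_edge (hq : IsConvexPolygon q) {c d : Fin (n + 1)} (hc : 0 < c) (hcd : c < d)
    (hd : d < Fin.last n) : line[ℝ, q 0, q (Fin.last n)].SSameSide (q c) (q d) := by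
  refine sSameSide_chord_of_disjoint_edgeSeg hq.2 hc hcd hd fun i hi hi' => ?_
  have hlast : edgeSeg q (Fin.last n) = seg (q 0) (q (Fin.last n)) := by
    rw [edgeSeg, Fin.last_add_one, seg, seg, segment_symm]
  rw [← hlast]
  refine hq.1.disjoint_edgeSeg i.castSucc_ne_last.symm ?_ ?_
  · rw [Fin.last_add_one]
    exact hi.ne
  · rw [Fin.coeSucc_eq_succ]
    exact hi'.ne

lemma sSameSide_edge (hq : IsConvexPolygon q) {i j k : Fin (n + 1)} (hji : j ≠ i)
    (hji' : j ≠ i + 1) (hki : k ≠ i) (hki' : k ≠ i + 1) (hjk : j ≠ k) :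
    line[ℝ, q i, q (i + 1)].SSameSide (q j) (q k) := by
  wlog hlt : j - (i + 1) < k - (i + 1) generalizing j k
  · exact (this hki hki' hji hji' hjk.symm
      (lt_of_le_of_ne (not_lt.1 hlt) fun h => hjk (sub_left_injective h).symm)).symm
  have hpos : 0 < j - (i + 1) := Fin.pos_iff_ne_zero.2 (sub_ne_zero.2 hji')
  have hlast : Fin.last n + (i + 1) = i := by
    rw [add_comm i, ← add_assoc, Fin.last_add_one, zero_add]
  have hne : k - (i + 1) ≠ Fin.last n := fun h => hki (by rw [← hlast, ← h, sub_add_cancel])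
  have hside := (hq.rotate (i + 1)).sSameSide_last_edge hpos hlt (Fin.lt_last_iff_ne_last.2 hne)
  rw [pair_comm]
  simpa only [zero_add, hlast, sub_add_cancel] using hside

lemma disjoint_chord_edgeSeg (hq : IsConvexPolygon q) {a b i : Fin (n + 1)} (hab : a ≠ b)
    (hai : a ≠ i) (hai' : a ≠ i + 1) (hbi : b ≠ i) (hbi' : b ≠ i + 1) :
    Disjoint (seg (q a) (q b)) (edgeSeg q i) :=
  (disjoint_segment_of_sSameSide (hq.sSameSide_edge hai hai' hbi hbi' hab)).symm

lemma disjoint_nested_chords (hq : IsConvexPolygon q) {a b c d : Fin (n + 1)} (hac : a < c)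
    (hcd : c < d) (hdb : d < b) : Disjoint (seg (q a) (q b)) (seg (q c) (q d)) := by
  apply disjoint_segment_of_sSameSide
  refine sSameSide_chord_of_disjoint_edgeSeg hq.2 hac hcd hdb fun i hai hib => ?_
  have hlt : i.castSucc < i.succ := i.castSucc_lt_succ
  refine hq.disjoint_chord_edgeSeg (hac.trans (hcd.trans hdb)).ne hai.ne ?_ (hlt.trans hib).ne' ?_
  · rw [Fin.coeSucc_eq_succ]
    exact (hai.trans hlt).ne
  · rw [Fin.coeSucc_eq_succ]
    exact hib.ne'

lemma nc_of_uIcc_ssubset (hq : IsConvexPolygon q) {a b c d : Fin (n + 1)} (hcd : c ≠ d)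
    (h : uIcc c d ⊂ uIcc a b) : NC (q a) (q b) (q c) (q d) := by
  wlog hab : a ≤ b generalizing a b
  · exact (this (uIcc_comm a b ▸ h) (le_of_not_ge hab)).swap_left
  wlog hcd' : c ≤ d generalizing c d
  · exact (this hcd.symm (uIcc_comm c d ▸ h) (le_of_not_ge hcd')).swap_right
  rw [uIcc_of_le hab, uIcc_of_le hcd'] at h
  obtain ⟨hac, hdb⟩ := (Icc_subset_Icc_iff hcd').1 h.subset
  have hlt : c < d := lt_of_le_of_ne hcd' hcd
  rcases hac.eq_or_lt with rfl | hac
  · have hdb' : d ≠ b := by rintro rfl; exact h.ne rfl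
    exact nc_of_common_endpoint hq.2 (hlt.trans_le hdb).ne hlt.ne' hdb'
  · rcases hdb.eq_or_lt with rfl | hdb
    · exact (nc_of_common_endpoint hq.2 (hac.trans hlt).ne' hcd hac.ne').swap_left.swap_right
    · exact .of_disjoint (hq.disjoint_nested_chords hac hlt hdb)

end IsConvexPolygon

section Zigzag

variable {m : ℕ}

/-- The vertex sequence `0, m + 1, 1, m, 2, …` of the zig-zag path, alternating between low and
high indices. It is the sequence `q_{m+2}, q_m, q_0, q_{m-1}, …` with indices shifted by one
modulo `m + 3`, so that it starts at `0`. -/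
def zigzag (m : ℕ) (k : Fin (m + 1)) : Fin (m + 3) :=
  if Even k.1 then ⟨k.1 / 2, by omega⟩ else ⟨m + 1 - k.1 / 2, by omega⟩

lemma val_zigzag (k : Fin (m + 1)) :
    (zigzag m k : ℕ) = if Even k.1 then k.1 / 2 else m + 1 - k.1 / 2 := by
  unfold zigzag
  split_ifs <;> rfl

lemma zigzag_injective : Injective (zigzag m) := by
  intro k l h
  have hval := congrArg Fin.val h
  simp only [val_zigzag, Nat.even_iff] at hval
  ext
  split_ifs at hval <;> omega

lemma uIcc_zigzag (k : Fin m) :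
    uIcc (zigzag m k.castSucc) (zigzag m k.succ) =
      Icc ⟨(k.1 + 1) / 2, by omega⟩ ⟨m + 1 - k.1 / 2, by omega⟩ := by
  ext x
  simp only [mem_uIcc, mem_Icc, Fin.le_def, val_zigzag, Fin.val_castSucc, Fin.val_succ,
    Nat.even_iff]
  split_ifs <;> omega

lemma strictAnti_uIcc_zigzag :
    StrictAnti fun k : Fin m => uIcc (zigzag m k.castSucc) (zigzag m k.succ) := by
  intro k l hkl
  rw [Fin.lt_def] at hkl
  simp only [uIcc_zigzag]
  refine ⟨Icc_subset_Icc ?_ ?_, fun hsub => ?_⟩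
  · rw [Fin.mk_le_mk]
    omega
  · rw [Fin.mk_le_mk]
    omega
  · rw [Icc_subset_Icc_iff (by rw [Fin.mk_le_mk]; omega), Fin.mk_le_mk, Fin.mk_le_mk] at hsub
    omega

lemma not_adjV_zigzag (k : Fin m) : ¬ adjV (zigzag m k.castSucc) (zigzag m k.succ) := by
  intro h
  have hval := val_eq_of_adjV h
  simp only [Fin.ext_iff, val_zigzag, Fin.val_castSucc, Fin.val_succ, Fin.val_last, Fin.val_zero,
    Nat.even_iff] at hval
  split_ifs at hval <;> omega

end Zigzag

/-- Every convex polygon with `m + 3` vertices admits a straight-line planar polygon embedding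
of the path graph on `m + 1` nodes (`m` edges): nodes map injectively to polygon vertices,
every path edge is a diagonal (its endpoints are non-adjacent in the polygon), and distinct
path edges meet at most in shared endpoints. -/
theorem stmt_1 (m : ℕ) (q : Fin (m + 3) → Pt) (hQ : IsConvexPolygon q) :
    ∃ f : Fin (m + 1) → Fin (m + 3),
      Function.Injective f ∧
      (∀ k : Fin m, ¬ adjV (f k.castSucc) (f k.succ)) ∧
      (∀ k l : Fin m, k ≠ l →
        NC (q (f k.castSucc)) (q (f k.succ)) (q (f l.castSucc)) (q (f l.succ))) := by
  refine ⟨zigzag m, zigzag_injective, not_adjV_zigzag, fun k l hkl => ?_⟩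
  have hne (i : Fin m) : zigzag m i.castSucc ≠ zigzag m i.succ :=
    zigzag_injective.ne i.castSucc_lt_succ.ne
  rcases hkl.lt_or_gt with h | h
  · exact hQ.nc_of_uIcc_ssubset (hne l) (strictAnti_uIcc_zigzag h)
  · exact (hQ.nc_of_uIcc_ssubset (hne k) (strictAnti_uIcc_zigzag h)).symm
end

section
/- If a cycle graph C is planarly polygon-embedded into a simple polygon P with n vertices (each node of C mapped to a distinct vertex of P, each cycle edge drawn as a non-crossing diagonal of P, with no cycle edge equal to a polygon edge), then the number of nodes of C is at most ⌊n/2⌋. -/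
open Set Function

/-!
Off the edge `[a, b]` the function `x ↦ √((b - x) / (a - x))` is continuous, and its product over
the edges of a closed polygon is the parity `(-1) ^ w` of the winding number `w` about `x`. For the
boundary polygon of a region `K` this product changes sign exactly where an edge is crossed, which
is also where one enters or leaves `K`; hence it is constant on the interior of `K`.

A diagonal of `K` cuts the boundary into two loops, and the product of their signs is the sign of
the boundary. A diagonal with interleaved endpoints that missed the first one would give the same
relation between the signs of the two loops along the remaining boundary arcs, whereas comparing
the square roots near a common endpoint of the three arcs of the theta-curve gives the opposite
one. So diagonals with interleaved endpoints meet.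

Consequently all other nodes of an embedded cycle lie on the same side of each of its edges. If the
successor of a used vertex `f k` were a used vertex, then one of the two cycle edges at `k` would
separate some nodes. Hence the used vertices and their successors are `2 * m` distinct vertices.
-/

namespace PolygonEmbedding

open Complex Topology Filter

section Sqrt

variable {z : ℂ}

lemma sqrt_sq (z : ℂ) : sqrt z ^ 2 = z := by
  simp only [sqrt, ← Nat.cast_ofNat (R := ℂ) (n := 2), cpow_nat_inv_pow z two_ne_zero]

lemma sqrt_ne_zero (hz : z ≠ 0) : sqrt z ≠ 0 := by
  intro h
  exact hz (by rw [← sqrt_sq z, h, zero_pow two_ne_zero])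

lemma continuousAt_sqrt_of_mem_slitPlane (hz : z ∈ slitPlane) : ContinuousAt sqrt z :=
  continuousAt_sqrt ((mem_slitPlane_iff.1 hz).imp_left le_of_lt)

lemma sqrt_inv (hz : z ∈ slitPlane) : sqrt z⁻¹ = (sqrt z)⁻¹ :=
  inv_cpow _ _ (slitPlane_arg_ne_pi hz)

lemma sqrt_of_im_pos (hz : 0 < z.im) : sqrt z = I * sqrt (-z) := by
  simp only [sqrt_eq_real_add_ite, norm_neg, neg_re, neg_im, hz.le, not_le.2 (neg_lt_zero.2 hz),
    if_true, if_false, sub_neg_eq_add, ← sub_eq_add_neg]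
  linear_combination (√((‖z‖ + z.re) / 2) : ℂ) * I_mul_I

lemma sqrt_of_im_neg (hz : z.im < 0) : sqrt z = -(I * sqrt (-z)) := by
  rw [sqrt_of_im_pos (z := -z) (by simpa using hz), neg_neg]
  linear_combination sqrt z * I_mul_I

lemma sqrt_ofReal_mul {t : ℝ} (ht : 0 < t) (z : ℂ) : sqrt (t * z) = √t * sqrt z := by
  have hsqrt (s : ℝ) : √(t * s / 2) = √t * √(s / 2) := by
    rw [mul_div_assoc, Real.sqrt_mul ht.le]
  simp only [sqrt_eq_real_add_ite, norm_mul, norm_real, Real.norm_of_nonneg ht.le, re_ofReal_mul,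
    im_ofReal_mul, mul_nonneg_iff_of_pos_left ht, ← mul_add, ← mul_sub, hsqrt, ofReal_mul]
  ring

lemma neg_div_mem_slitPlane {u v : ℂ} (h : ¬SameRay ℝ u v) : -u / v ∈ slitPlane := by
  contrapose! h
  rw [mem_slitPlane_iff_not_le_zero, not_not, nonpos_iff] at h
  obtain rfl | hv := eq_or_ne v 0
  · exact SameRay.zero_right u
  have hreal : -u / v = ((-u / v).re : ℂ) := Complex.ext rfl h.2
  have hu : u = (-(-u / v).re) • v := by
    rw [real_smul, ofReal_neg, ← hreal]
    field_simp
  rw [hu]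
  exact SameRay.sameRay_nonneg_smul_left v (neg_nonneg.2 h.1)

lemma sub_div_sub_mem_slitPlane {a b x : ℂ} (hx : x ∉ segment ℝ a b) :
    (b - x) / (a - x) ∈ slitPlane := by
  rw [segment_symm, mem_segment_iff_sameRay] at hx
  simpa using neg_div_mem_slitPlane hx

end Sqrt

section Chain

/-- A branch, continuous off `[a, b]`, of the square root of `(b - x) / (a - x)`: its argument is
half the angle under which `[a, b]` is seen from `x`. -/
noncomputable def edgeSqrt (a b x : ℂ) : ℂ := sqrt ((b - x) / (a - x))

/-- The product of `edgeSqrt` over the edges of the path `P i, P (i + 1), …, P j`. -/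
noncomputable def chainSqrt (P : ℕ → ℂ) (i j : ℕ) (x : ℂ) : ℂ :=
  ∏ k ∈ Finset.Ico i j, edgeSqrt (P k) (P (k + 1)) x

/-- The parity `(-1) ^ w` of the winding number `w` about `x` of the closed polygon with vertices
`P i, P (i + 1), …, P j`, for `x` not on that polygon. -/
noncomputable def loopSign (P : ℕ → ℂ) (i j : ℕ) (x : ℂ) : ℂ :=
  chainSqrt P i j x * edgeSqrt (P j) (P i) x

/-- The polygonal path with vertices `P i, P (i + 1), …, P j`. -/
def chain (P : ℕ → ℂ) (i j : ℕ) : Set ℂ := ⋃ k ∈ Ico i j, segment ℝ (P k) (P (k + 1))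

/-- The closed polygon with vertices `P i, P (i + 1), …, P j`. -/
def loop (P : ℕ → ℂ) (i j : ℕ) : Set ℂ := chain P i j ∪ segment ℝ (P i) (P j)

variable {P : ℕ → ℂ} {i j k : ℕ} {a b x y : ℂ}

lemma edgeSqrt_sq (a b x : ℂ) : edgeSqrt a b x ^ 2 = (b - x) / (a - x) := sqrt_sq _

lemma continuousAt_edgeSqrt (hx : x ∉ segment ℝ a b) : ContinuousAt (edgeSqrt a b) x := by
  have ha : a - x ≠ 0 := sub_ne_zero.2 (ne_of_mem_of_not_mem (left_mem_segment ℝ a b) hx)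
  exact (continuousAt_sqrt_of_mem_slitPlane (sub_div_sub_mem_slitPlane hx)).comp
    (f := fun x ↦ (b - x) / (a - x)) (by fun_prop (disch := assumption))

lemma edgeSqrt_mul_edgeSqrt_swap (hx : x ∉ segment ℝ a b) :
    edgeSqrt a b x * edgeSqrt b a x = 1 := by
  have hslit := sub_div_sub_mem_slitPlane hx
  rw [edgeSqrt, edgeSqrt, ← inv_div (b - x), sqrt_inv hslit,
    mul_inv_cancel₀ (sqrt_ne_zero (slitPlane_ne_zero hslit))]

lemma mem_chain : x ∈ chain P i j ↔ ∃ k, i ≤ k ∧ k < j ∧ x ∈ segment ℝ (P k) (P (k + 1)) := by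
  simp only [chain, mem_iUnion, mem_Ico, exists_prop, and_assoc]

lemma edge_subset_chain (hi : i ≤ k) (hj : k < j) : segment ℝ (P k) (P (k + 1)) ⊆ chain P i j :=
  fun _ hx ↦ mem_chain.2 ⟨k, hi, hj, hx⟩

lemma vertex_mem_chain (hij : i < j) (hk : k ∈ Icc i j) : P k ∈ chain P i j := by
  obtain hkj | rfl := hk.2.lt_or_eq
  · exact edge_subset_chain hk.1 hkj (left_mem_segment ℝ _ _)
  · obtain ⟨l, rfl⟩ := Nat.exists_eq_succ_of_ne_zero (Nat.ne_zero_of_lt hij)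
    exact edge_subset_chain (Nat.le_of_lt_succ hij) l.lt_succ_self (right_mem_segment ℝ _ _)

lemma chainSqrt_sq (hij : i ≤ j) (hx : ∀ k ∈ Icc i j, x ≠ P k) :
    chainSqrt P i j x ^ 2 = (P j - x) / (P i - x) := by
  have hne (k : ℕ) (hk : k ∈ Icc i j) : P k - x ≠ 0 := sub_ne_zero.2 (hx k hk).symm
  induction j, hij using Nat.le_induction with
  | base => simp [chainSqrt, div_self (hne i (by simp))]
  | succ j hij ih =>
    have hsub : Icc i j ⊆ Icc i (j + 1) := Icc_subset_Icc_right j.le_succ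
    rw [chainSqrt, Finset.prod_Ico_succ_top hij, mul_pow, ← chainSqrt,
      ih (fun k hk ↦ hx k (hsub hk)) (fun k hk ↦ hne k (hsub hk)), edgeSqrt_sq,
      mul_comm, div_mul_div_cancel₀ (hne j (by simp [hij]))]

lemma continuousAt_chainSqrt (hx : x ∉ chain P i j) : ContinuousAt (chainSqrt P i j) x :=
  tendsto_finsetProd _ fun _ hk ↦ continuousAt_edgeSqrt fun h ↦
    hx (edge_subset_chain (Finset.mem_Ico.1 hk).1 (Finset.mem_Ico.1 hk).2 h)

lemma chainSqrt_succ (P : ℕ → ℂ) (i : ℕ) : chainSqrt P i (i + 1) = edgeSqrt (P i) (P (i + 1)) := by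
  ext; simp [chainSqrt]

lemma chainSqrt_mul_chainSqrt (hij : i ≤ j) (hjk : j ≤ k) (x : ℂ) :
    chainSqrt P i j x * chainSqrt P j k x = chainSqrt P i k x :=
  Finset.prod_Ico_consecutive _ hij hjk

lemma continuousAt_loopSign (hx : x ∉ loop P i j) : ContinuousAt (loopSign P i j) x := by
  rw [loop, mem_union, not_or, segment_symm] at hx
  exact (continuousAt_chainSqrt hx.1).mul (continuousAt_edgeSqrt hx.2)

lemma vertex_mem_loop (hk : k ∈ Icc i j) : P k ∈ loop P i j := by
  obtain hkj | rfl := hk.2.lt_or_eq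
  · exact Or.inl (edge_subset_chain hk.1 hkj (left_mem_segment ℝ _ _))
  · exact Or.inr (right_mem_segment ℝ _ _)

lemma loopSign_sq (hij : i ≤ j) (hx : x ∉ loop P i j) : loopSign P i j x ^ 2 = 1 := by
  have hne (k : ℕ) (hk : k ∈ Icc i j) : x ≠ P k :=
    (ne_of_mem_of_not_mem (vertex_mem_loop hk) hx).symm
  rw [loopSign, mul_pow, chainSqrt_sq hij hne, edgeSqrt_sq,
    div_mul_div_comm, mul_comm, div_self]
  exact mul_ne_zero (sub_ne_zero.2 (hne i (by simp [hij])).symm)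
    (sub_ne_zero.2 (hne j (by simp [hij])).symm)

lemma loopSign_eq_of_isPreconnected (hij : i ≤ j) {T : Set ℂ} (hT : IsPreconnected T)
    (hdisj : Disjoint T (loop P i j)) (hx : x ∈ T) (hy : y ∈ T) :
    loopSign P i j x = loopSign P i j y := by
  have hcont : ContinuousOn (loopSign P i j) T := fun z hz ↦
    (continuousAt_loopSign (disjoint_left.1 hdisj hz)).continuousWithinAt
  obtain h | h := hT.eq_one_or_eq_neg_one_of_sq_eq hcont
    fun z hz ↦ loopSign_sq hij (disjoint_left.1 hdisj hz)
  · exact (h hx).trans (h hy).symm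
  · exact (h hx).trans (h hy).symm

lemma loopSign_mul_loopSign (hij : i ≤ j) (hjk : j ≤ k) (hclosed : P k = P i)
    (hx : x ∉ segment ℝ (P i) (P j)) :
    loopSign P i j x * loopSign P j k x = chainSqrt P i k x := by
  rw [← chainSqrt_mul_chainSqrt hij hjk, loopSign, loopSign, hclosed]
  linear_combination chainSqrt P i j x * chainSqrt P j k x * edgeSqrt_mul_edgeSqrt_swap hx

end Chain

section Corner

variable {a b o u v w σ : ℂ} {R : ℂ → ℂ}

lemma not_sameRay_of_segment_inter_subset (h : segment ℝ o a ∩ segment ℝ o b ⊆ {o})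
    (ha : a ≠ o) (hb : b ≠ o) : ¬SameRay ℝ (a - o) (b - o) := by
  intro hray
  obtain hw | hw := wbtw_total_of_sameRay_vsub_left (P := ℂ) hray
  · exact ha (h ⟨right_mem_segment ℝ o a, mem_segment_iff_wbtw.2 hw⟩)
  · exact hb (h ⟨mem_segment_iff_wbtw.2 hw, right_mem_segment ℝ o b⟩)

/-- The limit at `o`, along the direction `w`, of the contribution to `chainSqrt` of two
consecutive edges `b, o` and `o, a`, where `u = a - o` and `v = b - o`. -/
noncomputable def cornerSqrt (u v w : ℂ) : ℂ := sqrt (-u / w) * sqrt (-w / v)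

lemma tendsto_edgeSqrt_mul_edgeSqrt (hu : ¬SameRay ℝ (a - o) (w - o))
    (hv : ¬SameRay ℝ (w - o) (b - o)) :
    Tendsto (fun t : ℝ ↦ edgeSqrt o a (AffineMap.lineMap o w t) *
      edgeSqrt b o (AffineMap.lineMap o w t)) (𝓝[>] 0)
      (𝓝 (cornerSqrt (a - o) (b - o) (w - o))) := by
  have hw0 : w - o ≠ 0 := by rintro h; simp [h] at hu
  have hb0 : b - o ≠ 0 := by rintro h; simp [h] at hv
  have hcont : ContinuousAt (fun t : ℝ ↦ cornerSqrt (a - o - t * (w - o)) (b - o - t * (w - o))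
      (w - o)) 0 := by
    refine ContinuousAt.mul ?_ ?_
    · refine ContinuousAt.comp (f := fun t : ℝ ↦ -(a - o - t * (w - o)) / (w - o))
        (continuousAt_sqrt_of_mem_slitPlane (by simpa using neg_div_mem_slitPlane hu)) ?_
      fun_prop (disch := assumption)
    · refine ContinuousAt.comp (f := fun t : ℝ ↦ -(w - o) / (b - o - t * (w - o)))
        (continuousAt_sqrt_of_mem_slitPlane (by simpa using neg_div_mem_slitPlane hv)) ?_
      fun_prop (disch := simpa)
  have hlim := hcont.tendsto.mono_left (nhdsWithin_le_nhds (s := Ioi 0))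
  simp only [ofReal_zero, zero_mul, sub_zero] at hlim
  refine hlim.congr' ?_
  filter_upwards [self_mem_nhdsWithin] with t (ht : 0 < t)
  have ht0 : (t : ℂ) ≠ 0 := by exact_mod_cast ht.ne'
  have ha_ratio : -(a - o - t * (w - o)) / (w - o) =
      t * ((a - AffineMap.lineMap o w t) / (o - AffineMap.lineMap o w t)) := by
    rw [AffineMap.lineMap_apply_module', real_smul]; field_simp; ring
  have hb_ratio : (o - AffineMap.lineMap o w t) / (b - AffineMap.lineMap o w t) =
      t * (-(w - o) / (b - o - t * (w - o))) := by
    rw [AffineMap.lineMap_apply_module', real_smul]; ring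
  rw [cornerSqrt, ha_ratio, sqrt_ofReal_mul ht, edgeSqrt, edgeSqrt, hb_ratio, sqrt_ofReal_mul ht]
  ring

lemma eq_mul_cornerSqrt_of_forall_openSegment (hu : ¬SameRay ℝ (a - o) (w - o))
    (hv : ¬SameRay ℝ (w - o) (b - o)) (hR : ContinuousAt R o)
    (hσ : ∀ z ∈ openSegment ℝ o w, edgeSqrt o a z * R z * edgeSqrt b o z = σ) :
    σ = R o * cornerSqrt (a - o) (b - o) (w - o) := by
  have hline : Tendsto (fun t : ℝ ↦ AffineMap.lineMap o w t) (𝓝[>] (0 : ℝ)) (𝓝 o) := by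
    have := (AffineMap.lineMap_continuous (R := ℝ) (p := o) (q := w)).tendsto 0
    simpa using this.mono_left nhdsWithin_le_nhds
  refine tendsto_nhds_unique (tendsto_const_nhds.congr' ?_)
    ((hR.tendsto.comp hline).mul (tendsto_edgeSqrt_mul_edgeSqrt hu hv))
  filter_upwards [Ioo_mem_nhdsGT (zero_lt_one' ℝ)] with t ht
  rw [← hσ _ (openSegment_eq_image_lineMap ℝ o w ▸ mem_image_of_mem _ ht), Function.comp_apply]
  ring

lemma cornerSqrt_mul_cornerSqrt (huv : ¬SameRay ℝ u v) (hvw : ¬SameRay ℝ v w) :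
    cornerSqrt u v w * cornerSqrt v w u = -cornerSqrt u w v := by
  have hu_slit := neg_div_mem_slitPlane huv
  have hw_slit := neg_div_mem_slitPlane hvw
  have hinv (x y : ℂ) : -y / x = (-x / y)⁻¹ := by rw [inv_div, neg_div, div_neg]
  rw [cornerSqrt, cornerSqrt, cornerSqrt, hinv v w, hinv u v, sqrt_inv hu_slit, sqrt_inv hw_slit]
  have hA := sqrt_ne_zero (slitPlane_ne_zero hu_slit)
  have hB := sqrt_ne_zero (slitPlane_ne_zero hw_slit)
  have hsq : sqrt (-u / w) ^ 2 = -(sqrt (-u / v) ^ 2 * sqrt (-v / w) ^ 2) := by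
    have hv0 : v ≠ 0 := by rintro rfl; simp at huv
    simp only [sqrt_sq]
    field_simp
  generalize sqrt (-u / v) = A, sqrt (-v / w) = B, sqrt (-u / w) = C at *
  field_simp
  linear_combination hsq

/- The segments `[o, a]`, `[o, c]`, `[o, b]` begin the arcs of a theta-curve, whose loops through
`a` and `c`, through `c` and `b`, and through `a` and `b` have signs `σ₁`, `σ₂` and `σ` along the
beginning of the respective third arc. -/
lemma mul_eq_neg_of_forall_openSegment {c σ₁ σ₂ : ℂ} {R₁ R₂ : ℂ → ℂ}
    (hac : ¬SameRay ℝ (a - o) (c - o)) (hcb : ¬SameRay ℝ (c - o) (b - o))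
    (hab : ¬SameRay ℝ (a - o) (b - o)) (hR₁ : ContinuousAt R₁ o) (hR₂ : ContinuousAt R₂ o)
    (h₁ : ∀ z ∈ openSegment ℝ o b, edgeSqrt o a z * R₁ z * edgeSqrt c o z = σ₁)
    (h₂ : ∀ z ∈ openSegment ℝ o a, edgeSqrt o c z * R₂ z * edgeSqrt b o z = σ₂)
    (h : ∀ z ∈ openSegment ℝ o c, edgeSqrt o a z * (R₁ z * R₂ z) * edgeSqrt b o z = σ) :
    σ₁ * σ₂ = -σ := by
  rw [eq_mul_cornerSqrt_of_forall_openSegment hab (fun h ↦ hcb h.symm) hR₁ h₁,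
    eq_mul_cornerSqrt_of_forall_openSegment (fun h ↦ hac h.symm) hab hR₂ h₂,
    eq_mul_cornerSqrt_of_forall_openSegment hac hcb (hR₁.mul hR₂) h, Pi.mul_apply]
  linear_combination R₁ o * R₂ o * cornerSqrt_mul_cornerSqrt hac hcb

end Corner

section Topology

lemma eq_of_isPreconnected_of_eventually_eq_off {X α : Type*} [TopologicalSpace X]
    {U F : Set X} {g : X → α} (hU : IsPreconnected U) (hF : Dense Fᶜ)
    (hg : ∀ y ∈ U, ∃ c, ∀ᶠ z in 𝓝 y, z ∉ F → g z = c) {x y : X} (hx : x ∈ U \ F)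
    (hy : y ∈ U \ F) : g x = g y := by
  let A : α → Set X := fun c ↦ {y | ∀ᶠ z in 𝓝 y, z ∉ F → g z = c}
  have hAo (c : α) : IsOpen (A c) := isOpen_setOfPred_eventually_nhds
  have hval {y : X} {c : α} (hyc : y ∈ A c) (hyF : y ∉ F) : g y = c := hyc.self_of_nhds hyF
  have hcover : U ⊆ A (g x) ∪ ⋃ c ≠ g x, A c := fun y hyU ↦ by
    obtain ⟨c, hc⟩ := hg y hyU
    obtain rfl | hne := eq_or_ne c (g x)
    · exact Or.inl hc
    · exact Or.inr (mem_iUnion₂.2 ⟨c, hne, hc⟩)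
  have hdisj : U ∩ (A (g x) ∩ ⋃ c ≠ g x, A c) = ∅ := by
    rw [eq_empty_iff_forall_notMem]
    rintro y ⟨-, hyA, hyB⟩
    obtain ⟨c, hne, hyc⟩ := mem_iUnion₂.1 hyB
    obtain ⟨z, hz, hzF⟩ := hF.inter_open_nonempty _ ((hAo _).inter (hAo c)) ⟨y, hyA, hyc⟩
    exact hne ((hval hz.2 hzF).symm.trans (hval hz.1 hzF))
  have hxA : x ∈ A (g x) := by
    obtain ⟨c, hc⟩ := hg x hx.1
    exact (hval hc hx.2).symm ▸ hc
  obtain hsub | hsub := isPreconnected_iff_subset_of_disjoint.1 hU _ _ (hAo _)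
    (isOpen_biUnion fun c _ ↦ hAo c) hcover hdisj
  · exact (hval (hsub hy.1) hy.2).symm
  · exact (hdisj.subset ⟨hx.1, hxA, hsub hx.1⟩).elim

lemma eventually_eq_of_sq_eq_one {X 𝕜 : Type*} [TopologicalSpace X] [CommRing 𝕜] [NoZeroDivisors 𝕜]
    [CharZero 𝕜] [TopologicalSpace 𝕜] [T1Space 𝕜] {S : X → 𝕜} {x : X} (hS : ContinuousAt S x)
    (hsq : ∀ᶠ y in 𝓝 x, S y ^ 2 = 1) : ∀ᶠ y in 𝓝 x, S y = S x := by
  have hx : S x ≠ -S x := by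
    intro h
    have := hsq.self_of_nhds
    simp_all [self_eq_neg]
  filter_upwards [hsq, hS.eventually_ne hx] with y hy hne
  exact (sq_eq_sq_iff_eq_or_eq_neg.1 (hy.trans hsq.self_of_nhds.symm)).resolve_right hne

lemma subset_interior_or_subset_compl_of_isPreconnected {X : Type*} [TopologicalSpace X]
    {S K : Set X} (hS : IsPreconnected S) (hK : Disjoint S (frontier K)) :
    S ⊆ interior K ∨ S ⊆ Kᶜ := by
  refine (hS.subset_or_subset isOpen_interior isClosed_closure.isOpen_compl
    (disjoint_compl_right.mono_left interior_subset_closure) fun z hz ↦ ?_).imp_right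
    fun h ↦ h.trans (compl_subset_compl.2 subset_closure)
  by_contra hmem
  rw [mem_union, not_or, mem_compl_iff, not_not] at hmem
  exact disjoint_left.1 hK hz ⟨hmem.2, hmem.1⟩

variable {E : Type*} [AddCommGroup E] [Module ℝ E] [TopologicalSpace E] [IsTopologicalAddGroup E]
  [ContinuousSMul ℝ E] {K B : Set E} {L : E →L[ℝ] ℝ} {c : ℝ} {y : E}

lemma region_side_of_frontier_subset_hyperplane (hK : closure (interior K) = K) (hBo : IsOpen B)
    (hBc : Convex ℝ B) (hL : L ≠ 0) (hfr : B ∩ frontier K ⊆ {z | L z = c}) (hyB : y ∈ B)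
    (hy : y ∈ frontier K) :
    (∀ z ∈ B, L z ≠ c → (z ∈ K ↔ c < L z)) ∨ (∀ z ∈ B, L z ≠ c → (z ∈ K ↔ L z < c)) := by
  have hdense : Dense {z | L z ≠ c} :=
    (dense_compl_singleton c).preimage (L.isOpenMap_of_ne_zero hL)
  have hside {H : Set ℝ} (hH : Convex ℝ H) (hc : c ∉ H) :
      B ∩ L ⁻¹' H ⊆ interior K ∨ B ∩ L ⁻¹' H ⊆ Kᶜ := by
    refine subset_interior_or_subset_compl_of_isPreconnected
      (hBc.inter (hH.linear_preimage L.toLinearMap)).isPreconnected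
      (disjoint_left.2 fun z hz hzfr ↦ hc ?_)
    have hzc : L z = c := hfr ⟨hz.1, hzfr⟩
    exact hzc ▸ hz.2
  obtain hgt | hgt := hside (convex_Ioi c) self_notMem_Ioi <;>
    obtain hlt | hlt := hside (convex_Iio c) self_notMem_Iio
  · have hBK : B ⊆ K :=
      calc B ⊆ closure (B ∩ {z | L z ≠ c}) := hdense.open_subset_closure_inter hBo
        _ ⊆ closure (interior K) := closure_mono fun z ⟨hzB, hzc⟩ ↦
          hzc.lt_or_gt.elim (fun h ↦ hlt ⟨hzB, h⟩) fun h ↦ hgt ⟨hzB, h⟩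
        _ = K := hK
    exact (hy.2 (interior_maximal hBK hBo hyB)).elim
  · refine Or.inl fun z hz hzc ↦ ⟨fun hzK ↦ ?_, fun h ↦ interior_subset (hgt ⟨hz, h⟩)⟩
    exact hzc.lt_or_gt.resolve_left fun h ↦ hlt ⟨hz, h⟩ hzK
  · refine Or.inr fun z hz hzc ↦ ⟨fun hzK ↦ ?_, fun h ↦ interior_subset (hlt ⟨hz, h⟩)⟩
    exact hzc.lt_or_gt.resolve_right fun h ↦ hgt ⟨hz, h⟩ hzK
  · have hyK : y ∈ closure (interior K) := by
      rw [hK, ← (hK ▸ isClosed_closure : IsClosed K).closure_eq]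
      exact hy.1
    have hne : (B ∩ interior K).Nonempty := mem_closure_iff.1 hyK B hBo hyB
    obtain ⟨z, ⟨hzB, hzK⟩, hzc⟩ := hdense.inter_open_nonempty _ (hBo.inter isOpen_interior) hne
    exact (hzc.lt_or_gt.elim (fun h ↦ hlt ⟨hzB, h⟩) fun h ↦ hgt ⟨hzB, h⟩)
      (interior_subset hzK) |>.elim

end Topology

/-- The segments `[a, b]` and `[c, d]` meet at most in shared endpoints. -/
def MeetAtEnds (a b c d : ℂ) : Prop := segment ℝ a b ∩ segment ℝ c d ⊆ {a, b} ∩ {c, d}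

/-- `P 0, P 1, …, P n` is a simple closed polygon, traversed once. -/
structure IsSimpleClosedPath (P : ℕ → ℂ) (n : ℕ) : Prop where
  three_le : 3 ≤ n
  closed : P n = P 0
  injOn : InjOn P (Iio n)
  edges : ∀ i < n, ∀ j < n, i ≠ j → MeetAtEnds (P i) (P (i + 1)) (P j) (P (j + 1))

/-- `K` is a closed region, equal to the closure of its interior, with boundary the closed polygon
`P 0, P 1, …, P n`. -/
structure IsRegionOfPath (P : ℕ → ℂ) (n : ℕ) (K : Set ℂ) : Prop where
  closure_interior : closure (interior K) = K
  frontier_eq : frontier K = chain P 0 n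

section Side

variable {a b y z : ℂ}

lemma isClosed_segment (a b : ℂ) : IsClosed (segment ℝ a b) := by
  rw [← convexHull_pair]
  exact ((toFinite {a, b}).isCompact_convexHull (𝕜 := ℝ)).isClosed

/-- `sideFunctional a b z - sideFunctional a b a` is twice the signed area of `a, b, z`, up to
sign, and so tells the two sides of the line through `a` and `b` apart. -/
noncomputable def sideFunctional (a b : ℂ) : ℂ →L[ℝ] ℝ :=
  imCLM ∘L (ContinuousLinearMap.mul ℝ ℂ (starRingEnd ℂ (b - a)))

lemma sideFunctional_ne_zero (hab : a ≠ b) : sideFunctional a b ≠ 0 := by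
  intro h
  have hI := DFunLike.congr_fun h (I * (b - a))
  have hval : starRingEnd ℂ (b - a) * (I * (b - a)) = I * normSq (b - a) := by
    rw [normSq_eq_conj_mul_self]; ring
  simp [sideFunctional, -map_sub, hval, sub_eq_zero, hab.symm] at hI

lemma im_div_sub (a b z : ℂ) :
    ((b - z) / (a - z)).im = (sideFunctional a b z - sideFunctional a b a) / normSq (a - z) := by
  rw [div_eq_mul_inv, inv_def, ← mul_assoc, im_mul_ofReal]
  simp [sideFunctional]
  ring

lemma sideFunctional_eq_of_mem_segment (hz : z ∈ segment ℝ a b) :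
    sideFunctional a b z = sideFunctional a b a := by
  have hab : sideFunctional a b b = sideFunctional a b a := by simp [sideFunctional]; ring
  obtain ⟨s, t, -, -, hst, rfl⟩ := hz
  rw [map_add, map_smul, map_smul, hab, ← add_smul, hst, one_smul]

lemma re_div_sub_neg (hy : y ∈ openSegment ℝ a b) (hab : a ≠ b) : ((b - y) / (a - y)).re < 0 := by
  obtain ⟨s, t, hs, ht, hst, rfl⟩ := hy
  have hratio : (b - (s • a + t • b)) / (a - (s • a + t • b)) = ((-(s / t) : ℝ) : ℂ) := by
    have hst' : (s : ℂ) = 1 - t := by rw [eq_sub_iff_add_eq]; exact_mod_cast hst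
    have hb : b - (s • a + t • b) = s * (b - a) := by simp only [real_smul, hst']; ring
    have ha : a - (s • a + t • b) = -t * (b - a) := by simp only [real_smul, hst']; ring
    rw [ha, hb, mul_div_mul_right _ _ (sub_ne_zero.2 hab.symm)]
    push_cast
    exact div_neg _
  rw [hratio, ofReal_re]
  exact neg_neg_of_pos (div_pos hs ht)

lemma continuousAt_div_sub (hz : z ≠ a) : ContinuousAt (fun z ↦ (b - z) / (a - z)) z := by
  have : a - z ≠ 0 := sub_ne_zero.2 hz.symm
  fun_prop (disch := assumption)

lemma eventually_re_div_sub_neg (hy : y ∈ openSegment ℝ a b) (hab : a ≠ b) :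
    ∀ᶠ z in 𝓝 y, ((b - z) / (a - z)).re < 0 := by
  have hya : y ≠ a := by
    rintro rfl
    simpa using re_div_sub_neg hy hab
  exact (continuous_re.continuousAt.comp (continuousAt_div_sub hya)).eventually_lt
    continuousAt_const (re_div_sub_neg hy hab)

lemma eventually_sideFunctional_ne (hy : y ∈ openSegment ℝ a b) (hab : a ≠ b) :
    ∀ᶠ z in 𝓝 y, z ∉ segment ℝ a b → sideFunctional a b z ≠ sideFunctional a b a := by
  filter_upwards [eventually_re_div_sub_neg hy hab] with z hre hz heq
  refine (mem_slitPlane_iff.1 (sub_div_sub_mem_slitPlane hz)).elim hre.not_gt fun him ↦ him ?_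
  rw [im_div_sub, heq, sub_self, zero_div]

end Side

section Parity

variable {P : ℕ → ℂ} {n k : ℕ} {K : Set ℂ} {x y : ℂ}

lemma IsSimpleClosedPath.succ_ne (hP : IsSimpleClosedPath P n) (hk : k < n) : P k ≠ P (k + 1) := by
  have h3 := hP.three_le
  obtain hlt | hkn := Nat.lt_or_eq_of_le (Nat.succ_le_of_lt hk)
  · exact fun h ↦ k.succ_ne_self (hP.injOn hk hlt h).symm
  · rw [show k + 1 = n from hkn, hP.closed]
    exact fun h ↦ by have := hP.injOn hk (show 0 < n by omega) h; omega

lemma IsSimpleClosedPath.notMem_segment_of_ne (hP : IsSimpleClosedPath P n) (hk : k < n)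
    (hyk : y ∈ segment ℝ (P k) (P (k + 1))) (hy : ∀ i ≤ n, y ≠ P i) {i : ℕ} (hi : i < n)
    (hik : i ≠ k) : y ∉ segment ℝ (P i) (P (i + 1)) := fun hyi ↦
  (hP.edges i hi k hk hik ⟨hyi, hyk⟩).1.elim (hy i hi.le) (hy (i + 1) hi)

lemma IsSimpleClosedPath.chainSqrt_sq (hP : IsSimpleClosedPath P n) (hy : ∀ i ≤ n, y ≠ P i) :
    chainSqrt P 0 n y ^ 2 = 1 := by
  rw [PolygonEmbedding.chainSqrt_sq n.zero_le fun i hi ↦ hy i hi.2, hP.closed,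
    div_self (sub_ne_zero.2 (hy 0 n.zero_le).symm)]

lemma eventually_ne_vertices (hy : ∀ i ≤ n, y ≠ P i) : ∀ᶠ z in 𝓝 y, ∀ i ≤ n, z ≠ P i :=
  (eventually_all_finite (finite_Iic n)).2 fun i hi ↦ eventually_ne_nhds (hy i hi)

/- Crossing the edge multiplies its square root by `-1`, and no other factor jumps. -/
lemma IsSimpleClosedPath.exists_eventually_chainSqrt_eq (hP : IsSimpleClosedPath P n) (hk : k < n)
    (hyk : y ∈ openSegment ℝ (P k) (P (k + 1))) (hy : ∀ i ≤ n, y ≠ P i) :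
    ∃ σ : ℂ, ∀ᶠ z in 𝓝 y,
      (sideFunctional (P k) (P (k + 1)) (P k) < sideFunctional (P k) (P (k + 1)) z →
        chainSqrt P 0 n z = σ) ∧
      (sideFunctional (P k) (P (k + 1)) z < sideFunctional (P k) (P (k + 1)) (P k) →
        chainSqrt P 0 n z = -σ) := by
  set a := P k
  set b := P (k + 1)
  let rest (z : ℂ) : ℂ := ∏ i ∈ (Finset.Ico 0 n).erase k, edgeSqrt (P i) (P (i + 1)) z
  let J (z : ℂ) : ℂ := I * sqrt (-((b - z) / (a - z))) * rest z
  have hchain (z : ℂ) : chainSqrt P 0 n z = sqrt ((b - z) / (a - z)) * rest z :=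
    (Finset.mul_prod_erase _ _ (by simpa)).symm
  have hJ_cont : ContinuousAt J y := by
    refine (continuousAt_const.mul ?_).mul (tendsto_finsetProd _ fun i hi ↦ ?_)
    · have hslit : -((b - y) / (a - y)) ∈ slitPlane := mem_slitPlane_iff.2 <| Or.inl <| by
        simpa using re_div_sub_neg hyk (hP.succ_ne hk)
      exact (continuousAt_sqrt_of_mem_slitPlane hslit).comp (f := fun z ↦ -((b - z) / (a - z)))
        (continuousAt_div_sub (hy k hk.le)).neg
    · simp only [Finset.mem_erase, Finset.mem_Ico] at hi
      exact continuousAt_edgeSqrt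
        (hP.notMem_segment_of_ne hk (openSegment_subset_segment _ _ _ hyk) hy hi.2.2 hi.1)
  have hJ_sq : ∀ᶠ z in 𝓝 y, J z ^ 2 = 1 := by
    filter_upwards [eventually_ne_vertices hy] with z hz
    rw [← hP.chainSqrt_sq hz, hchain, mul_pow, mul_pow, mul_pow, sqrt_sq, sqrt_sq, I_sq]
    ring
  refine ⟨J y, ?_⟩
  filter_upwards [eventually_eq_of_sq_eq_one hJ_cont hJ_sq, eventually_ne_vertices hy]
    with z hJz hz
  have hpos : 0 < normSq (a - z) := normSq_pos.2 (sub_ne_zero.2 (hz k hk.le).symm)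
  refine ⟨fun h ↦ ?_, fun h ↦ ?_⟩
  · rw [← hJz, hchain, sqrt_of_im_pos]
    exact im_div_sub a b z ▸ div_pos (sub_pos.2 h) hpos
  · rw [← hJz, hchain, sqrt_of_im_neg, neg_mul]
    exact im_div_sub a b z ▸ div_neg_of_neg_of_pos (sub_neg.2 h) hpos

lemma IsRegionOfPath.isClosed (hK : IsRegionOfPath P n K) : IsClosed K :=
  hK.closure_interior ▸ isClosed_closure

lemma IsRegionOfPath.side_of_mem_edge (hP : IsSimpleClosedPath P n) (hK : IsRegionOfPath P n K)
    (hk : k < n) (hyk : y ∈ segment ℝ (P k) (P (k + 1))) (hy : ∀ i ≤ n, y ≠ P i) :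
    let L := sideFunctional (P k) (P (k + 1))
    (∀ᶠ z in 𝓝 y, L z ≠ L (P k) → (z ∈ K ↔ L (P k) < L z)) ∨
      (∀ᶠ z in 𝓝 y, L z ≠ L (P k) → (z ∈ K ↔ L z < L (P k))) := by
  intro L
  have hothers : IsClosed (⋃ i ∈ Iio n \ {k}, segment ℝ (P i) (P (i + 1))) :=
    ((finite_Iio n).sdiff).isClosed_biUnion fun _ _ ↦ isClosed_segment _ _
  have hy_others : y ∉ ⋃ i ∈ Iio n \ {k}, segment ℝ (P i) (P (i + 1)) := by
    simp only [mem_iUnion, not_exists]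
    exact fun i hi ↦ hP.notMem_segment_of_ne hk hyk hy hi.1 hi.2
  obtain ⟨r, hr, hball⟩ := Metric.isOpen_iff.1 hothers.isOpen_compl y hy_others
  have hfr : Metric.ball y r ∩ frontier K ⊆ {z | L z = L (P k)} := by
    rintro z ⟨hzr, hz⟩
    obtain ⟨i, -, hi, hzi⟩ := mem_chain.1 (hK.frontier_eq ▸ hz)
    obtain rfl | hik := eq_or_ne i k
    · exact sideFunctional_eq_of_mem_segment hzi
    · exact (hball hzr (mem_biUnion ⟨hi, hik⟩ hzi)).elim
  have hyfr : y ∈ frontier K := hK.frontier_eq ▸ edge_subset_chain k.zero_le hk hyk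
  exact (region_side_of_frontier_subset_hyperplane hK.closure_interior Metric.isOpen_ball
    (convex_ball y r) (sideFunctional_ne_zero (hP.succ_ne hk)) hfr (Metric.mem_ball_self hr)
    hyfr).imp (Metric.eventually_nhds_iff_ball.2 ⟨r, hr, ·⟩)
    (Metric.eventually_nhds_iff_ball.2 ⟨r, hr, ·⟩)

open scoped Classical in
lemma IsRegionOfPath.eventually_piecewise_of_mem_frontier (hP : IsSimpleClosedPath P n)
    (hK : IsRegionOfPath P n K) (hyfr : y ∈ frontier K) (hy : ∀ i ≤ n, y ≠ P i) :
    ∃ c, ∀ᶠ z in 𝓝 y, z ∉ frontier K →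
      K.piecewise (chainSqrt P 0 n) (-chainSqrt P 0 n) z = c := by
  obtain ⟨k, -, hk, hyk⟩ := mem_chain.1 (hK.frontier_eq ▸ hyfr)
  have hyo : y ∈ openSegment ℝ (P k) (P (k + 1)) :=
    mem_openSegment_of_ne_left_right (hy k hk.le).symm (hy (k + 1) hk).symm hyk
  obtain ⟨σ, hσ⟩ := hP.exists_eventually_chainSqrt_eq hk hyo hy
  have hoff := eventually_sideFunctional_ne hyo (hP.succ_ne hk)
  have hedge : segment ℝ (P k) (P (k + 1)) ⊆ frontier K :=
    hK.frontier_eq ▸ edge_subset_chain k.zero_le hk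
  obtain hside | hside := hK.side_of_mem_edge hP hk hyk hy
  · refine ⟨σ, ?_⟩
    filter_upwards [hσ, hoff, hside] with z hσz hoffz hsidez hz
    have hne := hoffz fun h ↦ hz (hedge h)
    by_cases hzK : z ∈ K
    · rw [piecewise_eq_of_mem _ _ _ hzK, hσz.1 ((hsidez hne).1 hzK)]
    · rw [piecewise_eq_of_notMem _ _ _ hzK, Pi.neg_apply,
        hσz.2 (hne.lt_of_le (not_lt.1 fun h ↦ hzK ((hsidez hne).2 h))), neg_neg]
  · refine ⟨-σ, ?_⟩
    filter_upwards [hσ, hoff, hside] with z hσz hoffz hsidez hz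
    have hne := hoffz fun h ↦ hz (hedge h)
    by_cases hzK : z ∈ K
    · rw [piecewise_eq_of_mem _ _ _ hzK, hσz.2 ((hsidez hne).1 hzK)]
    · rw [piecewise_eq_of_notMem _ _ _ hzK, Pi.neg_apply,
        hσz.1 (hne.symm.lt_of_le (not_lt.1 fun h ↦ hzK ((hsidez hne).2 h)))]

open scoped Classical in
lemma IsRegionOfPath.eventually_piecewise_of_notMem_frontier (hP : IsSimpleClosedPath P n)
    (hK : IsRegionOfPath P n K) (hyfr : y ∉ frontier K) (hy : ∀ i ≤ n, y ≠ P i) :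
    ∃ c, ∀ᶠ z in 𝓝 y, K.piecewise (chainSqrt P 0 n) (-chainSqrt P 0 n) z = c := by
  have hconst := eventually_eq_of_sq_eq_one (continuousAt_chainSqrt (hK.frontier_eq ▸ hyfr))
    ((eventually_ne_vertices hy).mono fun z hz ↦ hP.chainSqrt_sq hz)
  by_cases hyK : y ∈ K
  · have hint : y ∈ interior K := by
      by_contra h
      exact hyfr ⟨subset_closure hyK, h⟩
    refine ⟨chainSqrt P 0 n y, ?_⟩
    filter_upwards [hconst, isOpen_interior.mem_nhds hint] with z hz hzK
    rw [piecewise_eq_of_mem _ _ _ (interior_subset hzK), hz]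
  · refine ⟨-chainSqrt P 0 n y, ?_⟩
    filter_upwards [hconst, hK.isClosed.isOpen_compl.mem_nhds hyK] with z hz hzK
    rw [piecewise_eq_of_notMem _ _ _ hzK, Pi.neg_apply, hz]

lemma IsRegionOfPath.ne_vertex_of_mem_interior (hP : IsSimpleClosedPath P n)
    (hK : IsRegionOfPath P n K) (hy : y ∈ interior K) {i : ℕ} (hi : i ≤ n) : y ≠ P i := by
  have hfr : P i ∈ frontier K := hK.frontier_eq ▸
    vertex_mem_chain (Nat.zero_lt_of_lt hP.three_le) ⟨i.zero_le, hi⟩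
  rintro rfl
  exact hfr.2 hy

lemma IsRegionOfPath.chainSqrt_eq_of_mem_interior (hP : IsSimpleClosedPath P n)
    (hK : IsRegionOfPath P n K) (hx : x ∈ interior K) (hy : y ∈ interior K) :
    chainSqrt P 0 n x = chainSqrt P 0 n y := by
  classical
  have hU : IsPreconnected (P '' Iic n)ᶜ :=
    (((finite_Iic n).image P).countable.isPathConnected_compl_of_one_lt_rank
      (by simp [rank_real_complex])).isConnected.isPreconnected
  have hmem {z : ℂ} (hz : z ∈ interior K) : z ∈ (P '' Iic n)ᶜ \ frontier K :=
    ⟨fun ⟨i, hi, hzi⟩ ↦ hK.ne_vertex_of_mem_interior hP hz hi hzi.symm, fun h ↦ h.2 hz⟩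
  have heq := eq_of_isPreconnected_of_eventually_eq_off
    (g := K.piecewise (chainSqrt P 0 n) (-chainSqrt P 0 n)) hU
    (interior_eq_empty_iff_dense_compl.1 (interior_frontier hK.isClosed))
    (fun z hz ↦ ?_) (hmem hx) (hmem hy)
  · rwa [piecewise_eq_of_mem _ _ _ (interior_subset hx),
      piecewise_eq_of_mem _ _ _ (interior_subset hy)] at heq
  · have hzV (i : ℕ) (hi : i ≤ n) : z ≠ P i := fun h ↦ hz ⟨i, hi, h.symm⟩
    by_cases hzfr : z ∈ frontier K
    · exact hK.eventually_piecewise_of_mem_frontier hP hzfr hzV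
    · exact (hK.eventually_piecewise_of_notMem_frontier hP hzfr hzV).imp
        fun _ h ↦ h.mono fun _ hw _ ↦ hw

end Parity

/-- The segment `[P i, P j]` is a diagonal of the region `K` bounded by the closed polygon
`P 0, P 1, …, P n`. -/
structure IsDiagonalOfPath (P : ℕ → ℂ) (n : ℕ) (K : Set ℂ) (i j : ℕ) : Prop where
  subset : segment ℝ (P i) (P j) ⊆ K
  edges : ∀ k < n, MeetAtEnds (P i) (P j) (P k) (P (k + 1))

section Diagonal

variable {P : ℕ → ℂ} {n i j k u v : ℕ} {K : Set ℂ} {a b c d o z : ℂ}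

lemma MeetAtEnds.symm (h : MeetAtEnds a b c d) : MeetAtEnds c d a b := by
  rwa [MeetAtEnds, inter_comm, inter_comm {c, d}]

lemma MeetAtEnds.swap_left (h : MeetAtEnds a b c d) : MeetAtEnds b a c d := by
  rwa [MeetAtEnds, segment_symm, pair_comm]

lemma MeetAtEnds.swap_right (h : MeetAtEnds a b c d) : MeetAtEnds a b d c :=
  h.symm.swap_left.symm

lemma MeetAtEnds.not_sameRay (h : MeetAtEnds o a o b) (ha : a ≠ o) (hb : b ≠ o) (hab : a ≠ b) :
    ¬SameRay ℝ (a - o) (b - o) := by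
  refine not_sameRay_of_segment_inter_subset (h.trans ?_) ha hb
  rintro z ⟨rfl | rfl, hz | hz⟩
  exacts [rfl, rfl, hz, (hab hz).elim]

lemma IsSimpleClosedPath.eq_or_of_apply_eq (hP : IsSimpleClosedPath P n) (hi : i < n) (hj : j ≤ n)
    (h : P i = P j) : i = j ∨ (i = 0 ∧ j = n) := by
  obtain hj | rfl := hj.lt_or_eq
  · exact Or.inl (hP.injOn hi hj h)
  · exact Or.inr ⟨hP.injOn hi (Nat.zero_lt_of_lt hi) (h.trans hP.closed), rfl⟩

lemma IsSimpleClosedPath.zero_notMem_chain (hP : IsSimpleClosedPath P n) (hi : 0 < i) (hj : j < n) :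
    P 0 ∉ chain P i j := by
  intro h
  obtain ⟨k, hik, hkj, hk⟩ := mem_chain.1 h
  have h0 : 0 < n := Nat.zero_lt_of_lt hj
  obtain ⟨-, h | h⟩ := hP.edges 0 h0 k (hkj.trans hj) (hi.trans_le hik).ne
    ⟨left_mem_segment ℝ _ _, hk⟩
  · have := hP.injOn h0 (hkj.trans hj) h
    omega
  · have := hP.injOn h0 (show k + 1 < n by omega) h
    omega

lemma segment_inter_loop_subset (hij : i ≤ j)
    (hedges : ∀ k ∈ Ico i j, MeetAtEnds (P u) (P v) (P k) (P (k + 1)))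
    (hclosing : MeetAtEnds (P u) (P v) (P i) (P j)) :
    segment ℝ (P u) (P v) ∩ loop P i j ⊆ {P u, P v} ∩ P '' Icc i j := by
  rintro z ⟨hz, hzP | hzP⟩
  · obtain ⟨k, hik, hkj, hzk⟩ := mem_chain.1 hzP
    refine ⟨(hedges k ⟨hik, hkj⟩ ⟨hz, hzk⟩).1, ?_⟩
    obtain h | h := (hedges k ⟨hik, hkj⟩ ⟨hz, hzk⟩).2
    · exact ⟨k, ⟨hik, hkj.le⟩, h.symm⟩
    · exact ⟨k + 1, ⟨by omega, hkj⟩, h.symm⟩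
  · refine ⟨(hclosing ⟨hz, hzP⟩).1, ?_⟩
    obtain h | h := (hclosing ⟨hz, hzP⟩).2
    · exact ⟨i, left_mem_Icc.2 hij, h.symm⟩
    · exact ⟨j, right_mem_Icc.2 hij, h.symm⟩

lemma IsSimpleClosedPath.edge_inter_loop_subset (hP : IsSimpleClosedPath P n) (hij : i ≤ j)
    (hj : j ≤ n) (hdiag : ∀ k < n, MeetAtEnds (P i) (P j) (P k) (P (k + 1))) (hk : k < n)
    (hout : k < i ∨ j ≤ k) :
    segment ℝ (P k) (P (k + 1)) ∩ loop P i j ⊆ {P k, P (k + 1)} ∩ P '' Icc i j :=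
  segment_inter_loop_subset hij
    (fun l hl ↦ hP.edges k hk l (hl.2.trans_le hj) (by have := hl.1; have := hl.2; omega))
    (hdiag k hk).symm

lemma loopSign_vertex_eq (hij : i ≤ j) (huv : u ≤ v) (hdisj : Disjoint (chain P u v) (loop P i j)) :
    loopSign P i j (P u) = loopSign P i j (P v) := by
  induction v, huv using Nat.le_induction with
  | base => rfl
  | succ v huv ih =>
    have hchain : chain P u v ⊆ chain P u (v + 1) :=
      biUnion_subset_biUnion_left (Ico_subset_Ico_right v.le_succ)
    rw [ih (hdisj.mono_left hchain)]
    exact loopSign_eq_of_isPreconnected hij (convex_segment _ _).isPreconnected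
      (hdisj.mono_left (edge_subset_chain huv v.lt_succ_self))
      (left_mem_segment ℝ _ _) (right_mem_segment ℝ _ _)

lemma loopSign_eq_of_mem_openSegment (hij : i ≤ j) (hab : a ≠ b)
    (h : segment ℝ a b ∩ loop P i j ⊆ {a}) (hz : z ∈ openSegment ℝ a b) :
    loopSign P i j z = loopSign P i j b := by
  have hopen : openSegment ℝ a b ⊆ segment ℝ a b \ {a} := fun y hy ↦
    ⟨openSegment_subset_segment ℝ _ _ hy, by
      rintro rfl
      exact hab (left_mem_openSegment_iff.1 hy)⟩
  have hT : IsPreconnected (segment ℝ a b \ {a}) :=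
    (convex_openSegment a b).isPreconnected.subset_closure hopen
      (sdiff_subset.trans segment_subset_closure_openSegment)
  exact loopSign_eq_of_isPreconnected hij hT
    (disjoint_left.2 fun y hy hyl ↦ hy.2 (h ⟨hy.1, hyl⟩)) (hopen hz)
    ⟨right_mem_segment ℝ a b, hab.symm⟩

lemma IsDiagonalOfPath.openSegment_subset_interior (hK : IsRegionOfPath P n K)
    (hd : IsDiagonalOfPath P n K i j) (hne : P i ≠ P j) :
    openSegment ℝ (P i) (P j) ⊆ interior K := by
  intro z hz
  have hzs := openSegment_subset_segment ℝ _ _ hz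
  by_contra hzint
  have hzfr : z ∈ frontier K := ⟨subset_closure (hd.subset hzs), hzint⟩
  obtain ⟨k, -, hk, hzk⟩ := mem_chain.1 (hK.frontier_eq ▸ hzfr)
  obtain rfl | rfl := (hd.edges k hk ⟨hzs, hzk⟩).1
  · exact hne (left_mem_openSegment_iff.1 hz)
  · exact hne (right_mem_openSegment_iff.1 hz)

end Diagonal

section Theta

variable {P : ℕ → ℂ} {n b c d k : ℕ} {K : Set ℂ} {z : ℂ}

lemma IsSimpleClosedPath.loopSign_mul_loopSign_eq_neg (hP : IsSimpleClosedPath P n) (hc1 : 1 < c)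
    (hcn : c + 1 < n) (hdiag : ∀ k < n, MeetAtEnds (P 0) (P c) (P k) (P (k + 1))) {σ σ₁ σ₂ : ℂ}
    (h₁ : ∀ z ∈ openSegment ℝ (P 0) (P (n - 1)), loopSign P 0 c z = σ₁)
    (h₂ : ∀ z ∈ openSegment ℝ (P 0) (P 1), loopSign P c n z = σ₂)
    (h : ∀ z ∈ openSegment ℝ (P 0) (P c), chainSqrt P 0 n z = σ) : σ₁ * σ₂ = -σ := by
  obtain ⟨l, rfl⟩ : ∃ l, n = l + 1 := ⟨n - 1, by omega⟩
  have hne {i j : ℕ} (hi : i ≤ l) (hj : j ≤ l) (hij : i ≠ j) : P i ≠ P j :=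
    hP.injOn.ne (Nat.lt_succ_iff.2 hi) (Nat.lt_succ_iff.2 hj) hij
  have hlast {a b : ℂ} (h : MeetAtEnds a b (P l) (P (l + 1))) : MeetAtEnds a b (P 0) (P l) :=
    hP.closed ▸ h.swap_right
  have h1 : P 1 ≠ P 0 := hne (by omega) l.zero_le one_ne_zero
  have hc : P c ≠ P 0 := hne (by omega) l.zero_le (by omega)
  have hl : P l ≠ P 0 := hne le_rfl l.zero_le (by omega)
  have hchain₁ (z : ℂ) : edgeSqrt (P 0) (P 1) z * chainSqrt P 1 c z = chainSqrt P 0 c z := by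
    rw [← chainSqrt_mul_chainSqrt zero_le_one hc1.le,
      show chainSqrt P 0 1 = edgeSqrt (P 0) (P 1) from chainSqrt_succ P 0]
  have hchain₂ (z : ℂ) : chainSqrt P c l z * edgeSqrt (P l) (P 0) z = chainSqrt P c (l + 1) z := by
    rw [← chainSqrt_mul_chainSqrt (Nat.lt_succ_iff.1 (by omega)) l.le_succ, chainSqrt_succ P l,
      hP.closed]
  refine mul_eq_neg_of_forall_openSegment (o := P 0) (a := P 1) (b := P l) (c := P c)
    (R₁ := chainSqrt P 1 c) (R₂ := chainSqrt P c l)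
    ((hdiag 0 (by omega)).symm.not_sameRay h1 hc (hne (by omega) (by omega) (by omega)))
    ((hlast (hdiag l (by omega))).not_sameRay hc hl (hne (by omega) (by omega) (by omega)))
    ((hlast (hP.edges 0 (by omega) l (by omega) (by omega))).not_sameRay h1 hl
      (hne (by omega) (by omega) (by omega)))
    (continuousAt_chainSqrt (hP.zero_notMem_chain one_pos (by omega)))
    (continuousAt_chainSqrt (hP.zero_notMem_chain (by omega) (by omega)))
    (fun z hz ↦ ?_) (fun z hz ↦ ?_) (fun z hz ↦ ?_)
  · rw [hchain₁]
    exact h₁ z hz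
  · rw [← h₂ z hz, loopSign, ← hchain₂, hP.closed]
    ring
  · rw [← h z hz, ← chainSqrt_mul_chainSqrt c.zero_le (show c ≤ l + 1 by omega), ← hchain₁,
      ← hchain₂]
    ring

lemma IsSimpleClosedPath.vertex_notMem_image_Icc_zero (hP : IsSimpleClosedPath P n)
    (hck : c < k) (hk : k < n) : P k ∉ P '' Icc 0 c := by
  rintro ⟨i, hi, h⟩
  exact (hi.2.trans_lt hck).ne (hP.injOn ((hi.2.trans_lt hck).trans hk) hk h)

lemma IsSimpleClosedPath.vertex_notMem_image_Icc_last (hP : IsSimpleClosedPath P n)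
    (hk : 0 < k) (hkc : k < c) (hcn : c ≤ n) : P k ∉ P '' Icc c n := by
  rintro ⟨i, hi, h⟩
  obtain rfl | ⟨rfl, -⟩ := hP.eq_or_of_apply_eq (hkc.trans_le hcn) hi.2 h.symm
  exacts [hkc.not_ge hi.1, hk.false]

lemma IsSimpleClosedPath.loopSign_zero_eq_of_mem_openSegment (hP : IsSimpleClosedPath P n)
    (hcd : c < d) (hdn : d < n)
    (hdiag : ∀ k < n, MeetAtEnds (P 0) (P c) (P k) (P (k + 1)))
    (hz : z ∈ openSegment ℝ (P 0) (P (n - 1))) : loopSign P 0 c z = loopSign P 0 c (P d) := by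
  obtain ⟨l, rfl⟩ : ∃ l, n = l + 1 := ⟨n - 1, by omega⟩
  have hedge {k : ℕ} (hck : c ≤ k) (hk : k < l + 1) :=
    hP.edge_inter_loop_subset c.zero_le (by omega) hdiag hk (Or.inr hck)
  have hdisj : Disjoint (chain P d l) (loop P 0 c) := disjoint_left.2 fun y hy hyl ↦ by
    obtain ⟨k, hdk, hkl, hyk⟩ := mem_chain.1 hy
    obtain ⟨rfl | rfl, himage⟩ := hedge (by omega) (by omega) ⟨hyk, hyl⟩
    · exact hP.vertex_notMem_image_Icc_zero (by omega) (by omega) himage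
    · exact hP.vertex_notMem_image_Icc_zero (by omega) (by omega) himage
  rw [loopSign_vertex_eq c.zero_le (Nat.le_of_lt_succ hdn) hdisj]
  refine loopSign_eq_of_mem_openSegment c.zero_le (hP.closed ▸ (hP.succ_ne l.lt_succ_self).symm)
    ?_ hz
  rintro y ⟨hy, hyl⟩
  rw [← hP.closed, segment_symm] at hy
  obtain ⟨rfl | rfl, himage⟩ := hedge (by omega) l.lt_succ_self ⟨hy, hyl⟩
  · exact (hP.vertex_notMem_image_Icc_zero (by omega) l.lt_succ_self himage).elim
  · exact hP.closed

lemma IsSimpleClosedPath.loopSign_last_eq_of_mem_openSegment (hP : IsSimpleClosedPath P n)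
    (hb : 0 < b) (hbc : b < c) (hcn : c < n)
    (hdiag : ∀ k < n, MeetAtEnds (P 0) (P c) (P k) (P (k + 1)))
    (hz : z ∈ openSegment ℝ (P 0) (P 1)) : loopSign P c n z = loopSign P c n (P b) := by
  have hedge {k : ℕ} (hkc : k < c) :=
    hP.edge_inter_loop_subset hcn.le le_rfl (fun k hk ↦ hP.closed ▸ (hdiag k hk).swap_left)
      (hkc.trans hcn) (Or.inl hkc)
  have hdisj : Disjoint (chain P 1 b) (loop P c n) := disjoint_left.2 fun y hy hyl ↦ by
    obtain ⟨k, hk, hkb, hyk⟩ := mem_chain.1 hy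
    obtain ⟨rfl | rfl, himage⟩ := hedge (by omega) ⟨hyk, hyl⟩
    · exact hP.vertex_notMem_image_Icc_last hk (by omega) hcn.le himage
    · exact hP.vertex_notMem_image_Icc_last k.succ_pos (by omega) hcn.le himage
  rw [← loopSign_vertex_eq hcn.le hb hdisj]
  refine loopSign_eq_of_mem_openSegment hcn.le (hP.succ_ne (by omega)) ?_ hz
  rintro y ⟨hy, hyl⟩
  obtain ⟨rfl | rfl, himage⟩ := hedge (by omega) ⟨hy, hyl⟩
  · rfl
  · exact (hP.vertex_notMem_image_Icc_last one_pos (by omega) hcn.le himage).elim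

lemma IsSimpleClosedPath.loopSign_mul_loopSign_eq_of_mem_openSegment
    (hP : IsSimpleClosedPath P n) (hb : 0 < b) (hbc : b < c) (hcd : c < d) (hdn : d < n)
    (hdiag' : ∀ k < n, MeetAtEnds (P b) (P d) (P k) (P (k + 1)))
    (hmeet : segment ℝ (P b) (P d) ∩ segment ℝ (P 0) (P c) = ∅)
    (hz : z ∈ openSegment ℝ (P b) (P d)) :
    loopSign P 0 c (P d) * loopSign P c n (P b) = chainSqrt P 0 n z := by
  have hcn := hcd.trans hdn
  have hne : P b ≠ P d := hP.injOn.ne (hbc.trans hcn) hdn (hbc.trans hcd).ne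
  have hloop₁ : segment ℝ (P b) (P d) ∩ loop P 0 c ⊆ {P b} := by
    intro y hy
    obtain ⟨rfl | rfl, himage⟩ := segment_inter_loop_subset c.zero_le
      (fun k hk ↦ hdiag' k (hk.2.trans hcn)) (hmeet.trans_subset (empty_subset _)) hy
    exacts [rfl, (hP.vertex_notMem_image_Icc_zero hcd hdn himage).elim]
  have hloop₂ : segment ℝ (P d) (P b) ∩ loop P c n ⊆ {P d} := by
    intro y hy
    rw [segment_symm] at hy
    obtain ⟨rfl | rfl, himage⟩ := segment_inter_loop_subset hcn.le
      (fun k hk ↦ hdiag' k hk.2)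
      (by rw [MeetAtEnds, hP.closed, segment_symm ℝ (P c), hmeet]; exact empty_subset _) hy
    exacts [(hP.vertex_notMem_image_Icc_last hb hbc hcn.le himage).elim, rfl]
  rw [← loopSign_eq_of_mem_openSegment c.zero_le hne hloop₁ hz,
    ← loopSign_eq_of_mem_openSegment hcn.le hne.symm hloop₂ (openSegment_symm ℝ _ (P b) ▸ hz)]
  exact loopSign_mul_loopSign c.zero_le hcn.le hP.closed fun h ↦
    (hmeet.subset ⟨openSegment_subset_segment ℝ _ _ hz, h⟩).elim

theorem IsSimpleClosedPath.segment_inter_segment_nonempty (hP : IsSimpleClosedPath P n)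
    (hK : IsRegionOfPath P n K) (hb : 0 < b) (hbc : b < c) (hcd : c < d) (hdn : d < n)
    (hdiag : IsDiagonalOfPath P n K 0 c) (hdiag' : IsDiagonalOfPath P n K b d) :
    (segment ℝ (P b) (P d) ∩ segment ℝ (P 0) (P c)).Nonempty := by
  by_contra hmeet
  rw [not_nonempty_iff_eq_empty] at hmeet
  have hcn := hcd.trans hdn
  have hne : P b ≠ P d := hP.injOn.ne (hbc.trans hcn) hdn (hbc.trans hcd).ne
  have hne₀ : P 0 ≠ P c := hP.injOn.ne (Nat.zero_lt_of_lt hdn) hcn (hb.trans hbc).ne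
  obtain ⟨x, hx⟩ : (openSegment ℝ (P b) (P d)).Nonempty :=
    ⟨midpoint ℝ (P b) (P d), midpoint_mem_openSegment _ _⟩
  have hxK := hdiag'.openSegment_subset_interior hK hne hx
  have hprod := hP.loopSign_mul_loopSign_eq_of_mem_openSegment hb hbc hcd hdn hdiag'.edges hmeet hx
  have hcorner := hP.loopSign_mul_loopSign_eq_neg (by omega) (by omega) hdiag.edges
    (fun z ↦ hP.loopSign_zero_eq_of_mem_openSegment hcd hdn hdiag.edges)
    (fun z ↦ hP.loopSign_last_eq_of_mem_openSegment hb hbc hcn hdiag.edges)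
    (fun z hz ↦ hK.chainSqrt_eq_of_mem_interior hP
      (hdiag.openSegment_subset_interior hK hne₀ hz) hxK)
  have hsq := hP.chainSqrt_sq fun i hi ↦ hK.ne_vertex_of_mem_interior hP hxK hi
  have hzero : chainSqrt P 0 n x = 0 := self_eq_neg.1 (hprod.symm.trans hcorner)
  rw [hzero, zero_pow two_ne_zero] at hsq
  exact zero_ne_one hsq

end Theta

section CircularOrder

lemma sbtw_or_sbtw {α : Type*} [CircularOrder α] {a b c : α} (hab : a ≠ b) (hbc : b ≠ c)
    (hca : c ≠ a) : sbtw a b c ∨ sbtw c b a := by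
  by_contra! h
  rw [← btw_iff_not_sbtw, ← btw_iff_not_sbtw] at h
  obtain h | h | h := h.1.antisymm h.2
  exacts [hbc h.symm, hab h.symm, hca h.symm]

variable {n : ℕ}

lemma val_sub_lt_of_sbtw {u a v b : Fin n} (ha : sbtw u a v) (hb : sbtw v b u) :
    0 < (a - u).val ∧ (a - u).val < (v - u).val ∧ (v - u).val < (b - u).val := by
  rw [Fin.sbtw_iff] at ha hb
  have ha' := Fin.intCast_val_sub_eq_sub_add_ite a u
  have hv' := Fin.intCast_val_sub_eq_sub_add_ite v u
  have hb' := Fin.intCast_val_sub_eq_sub_add_ite b u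
  split_ifs at ha' hv' hb' <;> omega

lemma add_one_ne_self [NeZero n] (hn : 1 < n) (i : Fin n) : i + 1 ≠ i := by
  rw [Ne, add_eq_left, Fin.ext_iff, Fin.val_one', Nat.mod_eq_of_lt hn]
  exact one_ne_zero

lemma sub_one_ne_add_one [NeZero n] (hn : 2 < n) (i : Fin n) : i - 1 ≠ i + 1 := by
  intro h
  rw [sub_eq_iff_eq_add, add_assoc, left_eq_add, Fin.ext_iff, Fin.val_add, Fin.val_one',
    Nat.mod_eq_of_lt (by omega : 1 < n), Nat.mod_eq_of_lt hn] at h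
  exact two_ne_zero h

lemma sbtw_add_one [NeZero n] {u v : Fin n} (hv : v ≠ u) (hv' : v ≠ u + 1) :
    sbtw u (u + 1) v := by
  obtain ⟨k, rfl⟩ := Nat.exists_eq_succ_of_ne_zero (NeZero.ne n)
  rw [Fin.sbtw_iff]
  have hsucc := Fin.val_add_one u
  generalize u + 1 = w at hv' hsucc ⊢
  simp only [Fin.ext_iff, Fin.val_last] at hsucc
  split_ifs at hsucc <;> omega

end CircularOrder

section Plane

/-- The identification of the coordinate plane with the complex plane. -/
noncomputable def toC : Pt ≃L[ℝ] ℂ := equivRealProdCLM.symm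

lemma toC_image_seg (a b : Pt) : toC '' seg a b = segment ℝ (toC a) (toC b) :=
  image_segment ℝ toC.toLinearEquiv.toLinearMap.toAffineMap a b

lemma meetAtEnds_toC_iff {a b c d : Pt} :
    MeetAtEnds (toC a) (toC b) (toC c) (toC d) ↔ NC a b c d := by
  simp only [MeetAtEnds, NC, ← toC_image_seg, ← image_pair toC, ← image_inter toC.injective,
    image_subset_image_iff toC.injective]

variable {n : ℕ} [NeZero n]

/-- The vertices of the polygon `p` in cyclic order from vertex `i` on, as complex numbers. -/
noncomputable def unroll (p : Fin n → Pt) (i : Fin n) (t : ℕ) : ℂ := toC (p (i + Fin.ofNat n t))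

/-- The segment between the vertices `a` and `b` is a diagonal of the region `K` bounded by the
polygon `p`. -/
def IsDiagonal (p : Fin n → Pt) (K : Set Pt) (a b : Fin n) : Prop :=
  seg (p a) (p b) ⊆ K ∧ Visible p a b

variable {p : Fin n → Pt} {K : Set Pt} {a b u v : Fin n}

lemma add_ofNat_succ (i : Fin n) (t : ℕ) :
    i + Fin.ofNat n (t + 1) = i + Fin.ofNat n t + 1 := by
  rw [add_assoc]
  congr 1
  ext
  simp [Fin.val_add]

lemma unroll_succ (p : Fin n → Pt) (i : Fin n) (t : ℕ) :
    unroll p i (t + 1) = toC (p (i + Fin.ofNat n t + 1)) := by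
  rw [unroll, add_ofNat_succ]

lemma unroll_val_sub (p : Fin n → Pt) (i a : Fin n) : unroll p i (a - i).val = toC (p a) := by
  rw [unroll, Fin.ofNat_val_eq_self, add_sub_cancel]

lemma image_edgeSeg (p : Fin n → Pt) (i : Fin n) (t : ℕ) :
    toC '' edgeSeg p (i + Fin.ofNat n t) = segment ℝ (unroll p i t) (unroll p i (t + 1)) := by
  rw [edgeSeg, toC_image_seg, unroll_succ, unroll]

lemma injOn_add_ofNat (i : Fin n) : InjOn (fun t ↦ i + Fin.ofNat n t) (Iio n) := by
  intro s hs t ht h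
  simpa [Nat.mod_eq_of_lt (mem_Iio.1 hs), Nat.mod_eq_of_lt (mem_Iio.1 ht)] using
    congrArg Fin.val (add_left_cancel h)

lemma _root_.IsSimplePolygon.isSimpleClosedPath_unroll (hp : IsSimplePolygon p) (i : Fin n) :
    IsSimpleClosedPath (unroll p i) n where
  three_le := hp.1
  closed := by simp [unroll]
  injOn := (toC.injective.comp hp.2.1).comp_injOn (injOn_add_ofNat i)
  edges s hs t ht hst := by
    rw [unroll_succ, unroll_succ, unroll, unroll, meetAtEnds_toC_iff]
    exact hp.2.2 _ _ ((injOn_add_ofNat i).ne hs ht hst)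

lemma isRegionOfPath_image_toC (hK : closure (interior K) = K) (hfr : frontier K = ⋃ i, edgeSeg p i)
    (i : Fin n) : IsRegionOfPath (unroll p i) n (toC '' K) where
  closure_interior := by
    rw [← toC.coe_toHomeomorph, ← toC.toHomeomorph.image_interior,
      ← toC.toHomeomorph.image_closure, hK]
  frontier_eq := by
    have hsurj (j : Fin n) : i + Fin.ofNat n (j - i).val = j := by
      rw [Fin.ofNat_val_eq_self, add_sub_cancel]
    rw [← toC.coe_toHomeomorph, ← toC.toHomeomorph.image_frontier, hfr, image_iUnion,
      toC.coe_toHomeomorph]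
    ext z
    simp only [mem_iUnion, mem_chain, ← image_edgeSeg]
    exact ⟨fun ⟨j, hj⟩ ↦ ⟨(j - i).val, Nat.zero_le _, (j - i).isLt, (hsurj j).symm ▸ hj⟩,
      fun ⟨t, _, _, ht⟩ ↦ ⟨_, ht⟩⟩

lemma IsDiagonal.isDiagonalOfPath (h : IsDiagonal p K a b) (i : Fin n) :
    IsDiagonalOfPath (unroll p i) n (toC '' K) (a - i).val (b - i).val where
  subset := by
    rw [unroll_val_sub, unroll_val_sub, ← toC_image_seg]
    exact image_mono h.1
  edges k _ := by
    rw [unroll_val_sub, unroll_val_sub, unroll_succ, unroll, meetAtEnds_toC_iff]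
    exact h.2 _

theorem _root_.IsSimplePolygon.seg_inter_seg_nonempty (hp : IsSimplePolygon p)
    (hK : closure (interior K) = K) (hfr : frontier K = ⋃ i, edgeSeg p i)
    (huv : IsDiagonal p K u v) (hab : IsDiagonal p K a b) (ha : sbtw u a v) (hb : sbtw v b u) :
    (seg (p a) (p b) ∩ seg (p u) (p v)).Nonempty := by
  obtain ⟨h0, hav, hvb⟩ := val_sub_lt_of_sbtw ha hb
  have huv' := huv.isDiagonalOfPath u
  rw [sub_self, Fin.val_zero] at huv'
  have h := (hp.isSimpleClosedPath_unroll u).segment_inter_segment_nonempty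
    (isRegionOfPath_image_toC hK hfr u) h0 hav hvb (b - u).isLt huv' (hab.isDiagonalOfPath u)
  have h00 := unroll_val_sub p u u
  rw [sub_self, Fin.val_zero] at h00
  rwa [unroll_val_sub, unroll_val_sub, unroll_val_sub, h00, ← toC_image_seg, ← toC_image_seg,
    ← image_inter toC.injective, image_nonempty] at h

lemma IsDiagonal.symm (h : IsDiagonal p K a b) : IsDiagonal p K b a := by
  rwa [IsDiagonal, Visible, seg, segment_symm, pair_comm]

lemma IsDiagonal.sbtw_of_sbtw (hp : IsSimplePolygon p)
    (hK : closure (interior K) = K) (hfr : frontier K = ⋃ i, edgeSeg p i)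
    (huv : IsDiagonal p K u v) (hab : IsDiagonal p K a b) (hbu : b ≠ u) (hbv : b ≠ v)
    (hempty : seg (p a) (p b) ∩ seg (p u) (p v) = ∅) (ha : sbtw u a v) : sbtw u b v := by
  have huv' : v ≠ u := by
    rintro rfl
    exact sbtw_irrefl_left_right ha
  refine (sbtw_or_sbtw hbu.symm hbv huv').resolve_right fun hb ↦ ?_
  exact (hp.seg_inter_seg_nonempty hK hfr huv hab ha hb).ne_empty hempty

end Plane

section Cycle

variable {n m : ℕ} [NeZero n] [NeZero m] {p : Fin n → Pt} {K : Set Pt} {f : Fin m → Fin n}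
  {k s t : Fin m}

lemma _root_.IsCycleEmbedding.isDiagonal (hf : IsCycleEmbedding p K f) (k : Fin m) :
    IsDiagonal p K (f k) (f (k + 1)) :=
  ⟨hf.2.2.1 k, hf.2.2.2.2 k⟩

lemma _root_.IsCycleEmbedding.seg_inter_seg_eq_empty (hp : IsSimplePolygon p)
    (hf : IsCycleEmbedding p K f) (hs : s ≠ k) (hs' : s ≠ k + 1) (ht : s + 1 ≠ k)
    (ht' : s + 1 ≠ k + 1) :
    seg (p (f s)) (p (f (s + 1))) ∩ seg (p (f k)) (p (f (k + 1))) = ∅ := by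
  have hinj : Injective (p ∘ f) := hp.2.1.comp hf.1
  have hends : Disjoint ({p (f s), p (f (s + 1))} : Set Pt) {p (f k), p (f (k + 1))} := by
    simp only [disjoint_insert_left, disjoint_singleton_left, mem_insert_iff, mem_singleton_iff,
      not_or]
    exact ⟨⟨hinj.ne hs, hinj.ne hs'⟩, hinj.ne ht, hinj.ne ht'⟩
  have hne : ({p (f s), p (f (s + 1))} : Set Pt) ≠ {p (f k), p (f (k + 1))} :=
    hends.ne (insert_nonempty _ _).ne_empty
  exact subset_empty_iff.1 ((hf.2.2.2.1 s k hne).trans hends.inter_eq.subset)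

lemma _root_.IsCycleEmbedding.sbtw_succ_iff (hp : IsSimplePolygon p)
    (hK : closure (interior K) = K) (hfr : frontier K = ⋃ i, edgeSeg p i)
    (hf : IsCycleEmbedding p K f) (hs : s ≠ k) (hs' : s ≠ k + 1) (ht : s + 1 ≠ k)
    (ht' : s + 1 ≠ k + 1) :
    sbtw (f k) (f (s + 1)) (f (k + 1)) ↔ sbtw (f k) (f s) (f (k + 1)) := by
  have hempty := hf.seg_inter_seg_eq_empty hp hs hs' ht ht'
  have hd := hf.isDiagonal s
  constructor
  · refine (hf.isDiagonal k).sbtw_of_sbtw hp hK hfr hd.symm (hf.1.ne hs) (hf.1.ne hs') ?_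
    rwa [seg, segment_symm]
  · exact (hf.isDiagonal k).sbtw_of_sbtw hp hK hfr hd (hf.1.ne ht) (hf.1.ne ht') hempty

lemma _root_.IsCycleEmbedding.sbtw_add_ofNat_iff (hp : IsSimplePolygon p)
    (hK : closure (interior K) = K) (hfr : frontier K = ⋃ i, edgeSeg p i)
    (hf : IsCycleEmbedding p K f) (k : Fin m) {j : ℕ} (hj : 2 ≤ j) (hjm : j < m) :
    sbtw (f k) (f (k + Fin.ofNat m j)) (f (k + 1)) ↔
      sbtw (f k) (f (k + Fin.ofNat m 2)) (f (k + 1)) := by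
  have hne {i : ℕ} (hi : 2 ≤ i) (him : i < m) :
      k + Fin.ofNat m i ≠ k ∧ k + Fin.ofNat m i ≠ k + 1 :=
    ⟨by simpa using (injOn_add_ofNat k).ne him (Nat.zero_lt_of_lt him) (by omega),
      (injOn_add_ofNat k).ne him (show 1 < m by omega) (show i ≠ 1 by omega)⟩
  induction j, hj using Nat.le_induction with
  | base => rfl
  | succ j hj ih =>
    obtain ⟨h0, h1⟩ := hne hj (by omega)
    obtain ⟨h0', h1'⟩ := hne (hj.trans j.le_succ) hjm
    rw [add_ofNat_succ] at h0' h1' ⊢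
    exact (hf.sbtw_succ_iff hp hK hfr h0 h1 h0' h1').trans (ih (by omega))

lemma _root_.IsCycleEmbedding.sbtw_iff_sbtw (hp : IsSimplePolygon p)
    (hK : closure (interior K) = K) (hfr : frontier K = ⋃ i, edgeSeg p i)
    (hf : IsCycleEmbedding p K f) (hs : s ≠ k) (hs' : s ≠ k + 1) (ht : t ≠ k) (ht' : t ≠ k + 1) :
    sbtw (f k) (f s) (f (k + 1)) ↔ sbtw (f k) (f t) (f (k + 1)) := by
  have hside {t : Fin m} (ht : t ≠ k) (ht' : t ≠ k + 1) :
      sbtw (f k) (f t) (f (k + 1)) ↔ sbtw (f k) (f (k + Fin.ofNat m 2)) (f (k + 1)) := by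
    have h0 : (t - k).val ≠ 0 := by simpa [sub_eq_zero] using ht
    have h1 : (t - k).val ≠ 1 := by
      intro h
      refine ht' (sub_eq_iff_eq_add'.1 ?_)
      ext
      rw [h, Fin.val_one', Nat.mod_eq_of_lt (h ▸ (t - k).isLt)]
    rw [← hf.sbtw_add_ofNat_iff hp hK hfr k (show 2 ≤ (t - k).val by omega) (t - k).isLt,
      Fin.ofNat_val_eq_self, add_sub_cancel]
  exact (hside hs hs').trans (hside ht ht').symm

/- If `f k + 1` were `f l`, the edge from `f k` to `f (k - 1)` would separate the nodes `l` and
`k + 1`. -/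
theorem _root_.IsCycleEmbedding.apply_ne_apply_add_one (hm : 3 ≤ m) (hp : IsSimplePolygon p)
    (hK : closure (interior K) = K) (hfr : frontier K = ⋃ i, edgeSeg p i)
    (hf : IsCycleEmbedding p K f) (k l : Fin m) : f l ≠ f k + 1 := by
  intro hl
  have hlk : l ≠ k := by
    rintro rfl
    exact add_one_ne_self (Nat.lt_of_succ_lt hp.1) _ hl.symm
  have hlsucc : l ≠ k + 1 := fun h ↦ hf.2.1 k (Or.inl (h ▸ hl))
  have hlpred : l ≠ k - 1 := fun h ↦ hf.2.1 l (Or.inr (by rwa [h, sub_add_cancel, ← h]))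
  have hsucc : k + 1 ≠ k := add_one_ne_self (by omega) k
  have hpred : k - 1 ≠ k := fun h ↦ hsucc (sub_eq_iff_eq_add.1 h).symm
  have hps : k - 1 ≠ k + 1 := sub_one_ne_add_one hm k
  have hbtw {t : Fin m} (ht : t ≠ k) (hlt : l ≠ t) : sbtw (f k) (f l) (f t) :=
    hl ▸ sbtw_add_one (hf.1.ne ht) (hl ▸ hf.1.ne hlt.symm)
  have hsep : sbtw (f k) (f (k - 1)) (f (k + 1)) :=
    (hf.sbtw_iff_sbtw hp hK hfr hlk hlsucc hpred hps).1 (hbtw hsucc hlsucc)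
  have hside := hf.sbtw_iff_sbtw hp hK hfr (k := k - 1) (s := k + 1) (t := l)
    hps.symm (by rwa [sub_add_cancel]) hlpred (by rwa [sub_add_cancel])
  rw [sub_add_cancel] at hside
  exact (hbtw hpred hlpred).not_sbtw (hside.1 hsep.cyclic_left)

end Cycle

end PolygonEmbedding

theorem stmt_2_general (n m : ℕ) [NeZero n] [NeZero m] (hm : 3 ≤ m)
    (p : Fin n → Pt) (hP : IsSimplePolygon p)
    (K : Set Pt) (hK : closure (interior K) = K) (hfr : frontier K = ⋃ i, edgeSeg p i)
    (f : Fin m → Fin n) (hf : IsCycleEmbedding p K f) :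
    m ≤ n / 2 := by
  have hinj : Injective (Sum.elim f fun k ↦ f k + 1) :=
    hf.1.sumElim ((add_left_injective 1).comp hf.1) fun l k ↦
      hf.apply_ne_apply_add_one hm hP hK hfr k l
  have hcard := Fintype.card_le_of_injective _ hinj
  rw [Fintype.card_sum, Fintype.card_fin, Fintype.card_fin] at hcard
  omega

/-- If a cycle graph on `m ≥ 3` nodes is planarly polygon-embedded into a simple polygon with
`n` vertices, then `m ≤ ⌊n / 2⌋`. -/
theorem stmt_2 (n m : ℕ) [NeZero n] [NeZero m] (hm : 3 ≤ m)
    (p : Fin n → Pt) (hP : IsSimplePolygon p)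
    (K : Set Pt) (hK : IsRegionOf p K)
    (f : Fin m → Fin n) (hf : IsCycleEmbedding p K f) :
    m ≤ n / 2 :=
  stmt_2_general n m hm p hP K hK.2.1 hK.2.2 f hf
end

section
/- An isolated vertex of a simple polygon P cannot be the image of any node of a straight-line planarly polygon-embedded cycle graph in P. -/
open Set Function

/-!
Count modulo 2 how often the upward vertical ray from a point meets a polygonal chain. For two
disjoint segments in general position, the total crossing number of the rays from the ends of each
with the other depends only on the left-to-right order of the four ends. Summing over edges gives
the same identity for disjoint chains; in particular, the two ends of a chain have the same crossing
number with every closed chain disjoint from it.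

Suppose two disjoint chords of the region had alternating ends. The four boundary arcs and the two
chords form a drawing of `K₄` in which opposite edges are disjoint. Adding up the identities for the
three pairs of opposite edges shows that the crossing numbers of the boundary at a point `q` of one
chord and a point `q'` of the other have sum `1`. But both points are interior to the region, where
this number is `1`. Hence the ends of disjoint chords do not alternate.

The two cycle neighbours of an isolated vertex would be visible from it but not next to it, hence
consecutive vertices `a` and `a + 1`. The chords to them separate the vertices on the side of `a`
from those on the side of `a + 1`. No diagonal that avoids both chords leads from one side to the
other, so the rest of the cycle cannot join `a` to `a + 1`.
-/

section Crossing

/-- The ordinate at abscissa `x` of the line through `s` and `t`; for a vertical line the junk value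
is `s.2`. -/
noncomputable def height (s t : Pt) (x : ℝ) : ℝ :=
  s.2 + (t.2 - s.2) / (t.1 - s.1) * (x - s.1)

open Classical in
/-- The number modulo 2 of transversal intersections of the segment `st` with the upward vertical
ray from `z`. -/
noncomputable def crossing (s t z : Pt) : ZMod 2 :=
  if z.1 ∈ uIoo s.1 t.1 ∧ z.2 < height s t z.1 then 1 else 0

open Classical in
/-- The indicator modulo 2 of `s` lying strictly to the left of `u`. -/
noncomputable def leftOf (s u : Pt) : ZMod 2 := if s.1 < u.1 then 1 else 0

variable {s t u v z : Pt}

lemma seg_comm (s t : Pt) : seg s t = seg t s := segment_symm ℝ s t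

lemma height_comm (h : s.1 ≠ t.1) (x : ℝ) : height s t x = height t s x := by
  have hst : s.1 - t.1 ≠ 0 := sub_ne_zero.2 h
  have hts : t.1 - s.1 ≠ 0 := sub_ne_zero.2 h.symm
  unfold height
  field_simp
  ring

lemma height_left (s t : Pt) : height s t s.1 = s.2 := by simp [height]

lemma height_right (h : s.1 ≠ t.1) : height s t t.1 = t.2 := by
  rw [height_comm h, height_left]

lemma continuous_height (s t : Pt) : Continuous (height s t) := by
  unfold height; fun_prop

lemma height_lineMap (h : s.1 ≠ t.1) (θ : ℝ) :
    height s t (AffineMap.lineMap s.1 t.1 θ) = AffineMap.lineMap s.2 t.2 θ := by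
  have hts : t.1 - s.1 ≠ 0 := sub_ne_zero.2 h.symm
  simp only [height, AffineMap.lineMap_apply_ring']
  field_simp
  ring

lemma image_fst_seg (s t : Pt) : Prod.fst '' seg s t = uIcc s.1 t.1 := by
  rw [← segment_eq_uIcc]
  exact image_segment ℝ (LinearMap.fst ℝ ℝ ℝ).toAffineMap s t

lemma mem_seg_iff_height (h : s.1 ≠ t.1) :
    z ∈ seg s t ↔ z.1 ∈ uIcc s.1 t.1 ∧ z.2 = height s t z.1 := by
  have hsnd : ∀ w ∈ seg s t, w.2 = height s t w.1 := by
    intro w hw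
    rw [seg, segment_eq_image_lineMap] at hw
    obtain ⟨θ, -, rfl⟩ := hw
    rw [AffineMap.fst_lineMap, AffineMap.snd_lineMap, height_lineMap h]
  rw [← image_fst_seg]
  refine ⟨fun hz => ⟨mem_image_of_mem _ hz, hsnd z hz⟩, ?_⟩
  rintro ⟨⟨w, hw, hwz⟩, hz⟩
  rwa [← Prod.ext hwz (by rw [hz, hsnd w hw, hwz])]

lemma mk_height_mem_seg (h : s.1 ≠ t.1) {x : ℝ} (hx : x ∈ uIcc s.1 t.1) :
    (x, height s t x) ∈ seg s t :=
  (mem_seg_iff_height h).2 ⟨hx, rfl⟩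

lemma mem_uIoo_of_mem_seg (hz : z ∈ seg s t) (hs : z.1 ≠ s.1) (ht : z.1 ≠ t.1) :
    z.1 ∈ uIoo s.1 t.1 := by
  have hzx : z.1 ∈ uIcc s.1 t.1 := image_fst_seg s t ▸ mem_image_of_mem _ hz
  rcases le_total s.1 t.1 with h | h
  · rw [uIcc_of_le h] at hzx
    rw [uIoo_of_le h]
    exact ⟨hzx.1.lt_of_ne' hs, hzx.2.lt_of_ne ht⟩
  · rw [uIcc_of_ge h] at hzx
    rw [uIoo_of_ge h]
    exact ⟨hzx.1.lt_of_ne' ht, hzx.2.lt_of_ne hs⟩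

lemma isClosed_seg (s t : Pt) : IsClosed (seg s t) := by
  rw [seg, segment_eq_image_lineMap]
  exact (isCompact_Icc.image AffineMap.lineMap_continuous).isClosed

lemma height_lt_height_of_disjoint (hst : s.1 ≠ t.1) (huv : u.1 ≠ v.1)
    (hd : Disjoint (seg s t) (seg u v)) {x y : ℝ}
    (hx : x ∈ uIcc s.1 t.1 ∩ uIcc u.1 v.1) (hy : y ∈ uIcc s.1 t.1 ∩ uIcc u.1 v.1)
    (hlt : height s t x < height u v x) : height s t y < height u v y := by
  by_contra! hle
  obtain ⟨a, ha, hav⟩ := intermediate_value_uIcc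
    ((continuous_height u v).sub (continuous_height s t)).continuousOn
    (show (0 : ℝ) ∈ uIcc (height u v x - height s t x) (height u v y - height s t y) from
      mem_uIcc.2 (Or.inr ⟨sub_nonpos.2 hle, sub_nonneg.2 hlt.le⟩))
  refine disjoint_left.1 hd (mk_height_mem_seg hst (uIcc_subset_uIcc hx.1 hy.1 ha)) ?_
  rw [← sub_eq_zero.1 hav]
  exact mk_height_mem_seg huv (uIcc_subset_uIcc hx.2 hy.2 ha)

lemma crossing_comm (h : s.1 ≠ t.1) (z : Pt) : crossing s t z = crossing t s z := by
  rw [crossing, crossing, height_comm h, uIoo_comm]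

lemma leftOf_add_leftOf_swap (h : s.1 ≠ u.1) : leftOf s u + leftOf u s = 1 := by
  rcases h.lt_or_gt with h | h <;> simp [leftOf, h, h.le.not_gt]

/-- Two disjoint segments `st` and `uv` whose four ends have distinct abscissas, so that their ray
crossings can be compared. -/
structure GenericDisjoint (s t u v : Pt) : Prop where
  st : s.1 ≠ t.1
  uv : u.1 ≠ v.1
  su : s.1 ≠ u.1
  sv : s.1 ≠ v.1
  tu : t.1 ≠ u.1
  tv : t.1 ≠ v.1
  disjoint : Disjoint (seg s t) (seg u v)

namespace GenericDisjoint

lemma swap_left (h : GenericDisjoint s t u v) : GenericDisjoint t s u v :=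
  ⟨h.st.symm, h.uv, h.tu, h.tv, h.su, h.sv, seg_comm s t ▸ h.disjoint⟩

lemma symm (h : GenericDisjoint s t u v) : GenericDisjoint u v s t :=
  ⟨h.uv, h.st, h.su.symm, h.tu.symm, h.sv.symm, h.tv.symm, h.disjoint.symm⟩

lemma height_lt_height_iff (h : GenericDisjoint s t u v) {x y : ℝ}
    (hx : x ∈ uIcc s.1 t.1 ∩ uIcc u.1 v.1) (hy : y ∈ uIcc s.1 t.1 ∩ uIcc u.1 v.1) :
    height s t x < height u v x ↔ height s t y < height u v y :=
  ⟨height_lt_height_of_disjoint h.st h.uv h.disjoint hx hy,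
    height_lt_height_of_disjoint h.st h.uv h.disjoint hy hx⟩

lemma height_ne_height (h : GenericDisjoint s t u v) {x : ℝ}
    (hx : x ∈ uIcc s.1 t.1 ∩ uIcc u.1 v.1) : height s t x ≠ height u v x := fun heq =>
  disjoint_left.1 h.disjoint (mk_height_mem_seg h.st hx.1) (heq ▸ mk_height_mem_seg h.uv hx.2)

lemma crossing_add_crossing_of_lt (h : GenericDisjoint s t u v) (hst : s.1 < t.1) (huv : u.1 < v.1)
    (hsu : s.1 < u.1) :
    crossing s t u + crossing s t v + crossing u v s + crossing u v t =
      leftOf s u + leftOf s v + leftOf t u + leftOf t v := by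
  have hsv : s.1 < v.1 := hsu.trans huv
  have hs : s.1 ∉ Ioo u.1 v.1 := fun hs => hsu.not_gt hs.1
  simp only [crossing, leftOf, uIoo_of_lt hst, uIoo_of_lt huv, hs, false_and, if_false, hsu, hsv,
    if_true]
  rcases h.tu.lt_or_gt with htu | hut
  · have htv : t.1 < v.1 := htu.trans huv
    simp [mem_Ioo, htu, htu.not_gt, htv, htv.not_gt, CharTwo.add_self_eq_zero]
  have hu : u.1 ∈ uIcc s.1 t.1 ∩ uIcc u.1 v.1 := ⟨mem_uIcc_of_le hsu.le hut.le, left_mem_uIcc⟩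
  rcases h.tv.lt_or_gt with htv | hvt
  · have ht : t.1 ∈ uIcc s.1 t.1 ∩ uIcc u.1 v.1 := ⟨right_mem_uIcc, mem_uIcc_of_le hut.le htv.le⟩
    have hiff : u.2 < height s t u.1 ↔ ¬ t.2 < height u v t.1 := by
      have hne := h.height_ne_height ht
      have hlt := h.symm.height_lt_height_iff hu.symm ht.symm
      rw [height_right h.st] at hne hlt
      rw [not_lt, hne.symm.le_iff_lt, ← hlt, height_left]
    by_cases hlt : t.2 < height u v t.1 <;>
      simp [mem_Ioo, hut, hut.not_gt, htv, htv.not_gt, hsu, hiff, hlt, CharTwo.add_self_eq_zero]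
  · have hv : v.1 ∈ uIcc s.1 t.1 ∩ uIcc u.1 v.1 := ⟨mem_uIcc_of_le hsv.le hvt.le, right_mem_uIcc⟩
    have hiff : u.2 < height s t u.1 ↔ v.2 < height s t v.1 := by
      simpa only [height_left, height_right h.uv] using h.symm.height_lt_height_iff hu.symm hv.symm
    by_cases hlt : v.2 < height s t v.1 <;>
      simp [mem_Ioo, hut, hut.not_gt, hvt, hvt.not_gt, hsu, hsv, hiff, hlt,
        CharTwo.add_self_eq_zero]

lemma crossing_add_crossing_of_lt_of_lt (h : GenericDisjoint s t u v) (hst : s.1 < t.1)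
    (huv : u.1 < v.1) :
    crossing s t u + crossing s t v + crossing u v s + crossing u v t =
      leftOf s u + leftOf s v + leftOf t u + leftOf t v := by
  rcases h.su.lt_or_gt with hsu | hus
  · exact h.crossing_add_crossing_of_lt hst huv hsu
  · have e := h.symm.crossing_add_crossing_of_lt huv hst hus
    have := leftOf_add_leftOf_swap h.su
    have := leftOf_add_leftOf_swap h.sv
    have := leftOf_add_leftOf_swap h.tu
    have := leftOf_add_leftOf_swap h.tv
    grind

lemma crossing_add_crossing (h : GenericDisjoint s t u v) :
    crossing s t u + crossing s t v + crossing u v s + crossing u v t =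
      leftOf s u + leftOf s v + leftOf t u + leftOf t v := by
  wlog hst : s.1 < t.1 generalizing s t
  · have e := this h.swap_left (h.st.lt_or_gt.resolve_left hst)
    rw [crossing_comm h.st, crossing_comm h.st]
    linear_combination e
  wlog huv : u.1 < v.1 generalizing u v
  · have e := this h.symm.swap_left.symm (h.uv.lt_or_gt.resolve_left huv)
    rw [crossing_comm h.uv, crossing_comm h.uv]
    linear_combination e
  exact h.crossing_add_crossing_of_lt_of_lt hst huv

end GenericDisjoint

end Crossing

section Chain

/-- The mod 2 ray crossing number of a polygonal chain, given as the multiset of its edges. -/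
noncomputable def rayParity (C : Multiset (Pt × Pt)) (z : Pt) : ZMod 2 :=
  (C.map fun e => crossing e.1 e.2 z).sum

/-- The point set covered by a polygonal chain. -/
def chainSupport (C : Multiset (Pt × Pt)) : Set Pt := ⋃ e ∈ C, seg e.1 e.2

/-- `C` is a chain of nondegenerate edges with vertices in `V` whose boundary modulo 2 is `s + t`;
the boundary is tested against arbitrary functions on the plane. For `s = t` the chain is closed. -/
structure IsArc (V : Set Pt) (C : Multiset (Pt × Pt)) (s t : Pt) : Prop where
  fst_mem : ∀ e ∈ C, e.1 ∈ V
  snd_mem : ∀ e ∈ C, e.2 ∈ V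
  fst_ne_snd : ∀ e ∈ C, e.1 ≠ e.2
  sum_boundary : ∀ g : Pt → ZMod 2, (C.map fun e => g e.1 + g e.2).sum = g s + g t

variable {V : Set Pt} {C D : Multiset (Pt × Pt)} {s t u v : Pt}

lemma injOn_insert_of_notMem_image {α β : Type*} {f : α → β} {W : Set α} {x : α}
    (hW : InjOn f W) (hx : f x ∉ f '' W) : InjOn f (insert x W) :=
  (injOn_insert fun h => hx (mem_image_of_mem f h)).2 ⟨hW, hx⟩

lemma rayParity_add (C D : Multiset (Pt × Pt)) (z : Pt) :
    rayParity (C + D) z = rayParity C z + rayParity D z := by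
  simp [rayParity]

lemma chainSupport_add (C D : Multiset (Pt × Pt)) :
    chainSupport (C + D) = chainSupport C ∪ chainSupport D := by
  ext z
  simp only [chainSupport, Multiset.mem_add, mem_iUnion, mem_union, exists_prop, or_and_right,
    exists_or]

lemma chainSupport_singleton (e : Pt × Pt) : chainSupport {e} = seg e.1 e.2 := by
  simp [chainSupport]

lemma seg_subset_chainSupport {e : Pt × Pt} (he : e ∈ C) : seg e.1 e.2 ⊆ chainSupport C :=
  subset_biUnion_of_mem (u := fun e : Pt × Pt => seg e.1 e.2) he

namespace IsArc

lemma single (hs : s ∈ V) (ht : t ∈ V) (hne : s ≠ t) : IsArc V {(s, t)} s t where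
  fst_mem := by simpa using hs
  snd_mem := by simpa using ht
  fst_ne_snd := by simpa using hne
  sum_boundary := by simp

lemma symm (hC : IsArc V C s t) : IsArc V C t s :=
  ⟨hC.fst_mem, hC.snd_mem, hC.fst_ne_snd, fun g => by rw [hC.sum_boundary, add_comm]⟩

lemma trans (hC : IsArc V C s t) (hD : IsArc V D t u) : IsArc V (C + D) s u where
  fst_mem e he := (Multiset.mem_add.1 he).elim (hC.fst_mem e) (hD.fst_mem e)
  snd_mem e he := (Multiset.mem_add.1 he).elim (hC.snd_mem e) (hD.snd_mem e)
  fst_ne_snd e he := (Multiset.mem_add.1 he).elim (hC.fst_ne_snd e) (hD.fst_ne_snd e)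
  sum_boundary g := by
    rw [Multiset.map_add, Multiset.sum_add, hC.sum_boundary, hD.sum_boundary]
    linear_combination CharTwo.add_self_eq_zero (g t)

lemma genericDisjoint (hV : InjOn Prod.fst V) (hC : IsArc V C s t) (hD : IsArc V D u v)
    (hd : Disjoint (chainSupport C) (chainSupport D)) {e f : Pt × Pt} (he : e ∈ C) (hf : f ∈ D) :
    GenericDisjoint e.1 e.2 f.1 f.2 := by
  have hef : Disjoint (seg e.1 e.2) (seg f.1 f.2) :=
    hd.mono (seg_subset_chainSupport he) (seg_subset_chainSupport hf)
  have hne {x y : Pt} (hx : x ∈ V) (hy : y ∈ V) (h : x ≠ y) : x.1 ≠ y.1 := fun h' => h (hV hx hy h')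
  have he₁ := left_mem_segment ℝ e.1 e.2
  have he₂ := right_mem_segment ℝ e.1 e.2
  have hf₁ := left_mem_segment ℝ f.1 f.2
  have hf₂ := right_mem_segment ℝ f.1 f.2
  exact ⟨hne (hC.fst_mem e he) (hC.snd_mem e he) (hC.fst_ne_snd e he),
    hne (hD.fst_mem f hf) (hD.snd_mem f hf) (hD.fst_ne_snd f hf),
    hne (hC.fst_mem e he) (hD.fst_mem f hf) (hef.ne_of_mem he₁ hf₁),
    hne (hC.fst_mem e he) (hD.snd_mem f hf) (hef.ne_of_mem he₁ hf₂),
    hne (hC.snd_mem e he) (hD.fst_mem f hf) (hef.ne_of_mem he₂ hf₁),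
    hne (hC.snd_mem e he) (hD.snd_mem f hf) (hef.ne_of_mem he₂ hf₂), hef⟩

lemma crossing_add_rayParity (hD : IsArc V D u v) (h : ∀ f ∈ D, GenericDisjoint s t f.1 f.2) :
    crossing s t u + crossing s t v + (rayParity D s + rayParity D t) =
      leftOf s u + leftOf s v + (leftOf t u + leftOf t v) := by
  have key := congrArg Multiset.sum
    (Multiset.map_congr rfl fun f hf => (h f hf).crossing_add_crossing)
  have e := hD.sum_boundary (crossing s t)
  have e' := hD.sum_boundary (leftOf s)
  have e'' := hD.sum_boundary (leftOf t)
  simp only [Multiset.sum_map_add] at key e e' e''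
  simp only [rayParity]
  linear_combination key - e + e' + e''

lemma rayParity_add_rayParity (hV : InjOn Prod.fst V) (hC : IsArc V C s t) (hD : IsArc V D u v)
    (hd : Disjoint (chainSupport C) (chainSupport D)) :
    rayParity C u + rayParity C v + (rayParity D s + rayParity D t) =
      leftOf s u + leftOf s v + (leftOf t u + leftOf t v) := by
  have key := congrArg Multiset.sum (Multiset.map_congr rfl fun e he =>
    hD.crossing_add_rayParity fun f hf => genericDisjoint hV hC hD hd he hf)
  have e := hC.sum_boundary (rayParity D)
  have e' := hC.sum_boundary fun z => leftOf z u + leftOf z v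
  simp only [Multiset.sum_map_add] at key e e'
  simp only [rayParity] at key e ⊢
  linear_combination key - e + e'

lemma rayParity_eq_of_disjoint (hV : InjOn Prod.fst V) (hC : IsArc V C s s) (hD : IsArc V D u v)
    (hd : Disjoint (chainSupport C) (chainSupport D)) : rayParity C u = rayParity C v := by
  have key := rayParity_add_rayParity hV hC hD hd
  rwa [CharTwo.add_self_eq_zero, CharTwo.add_self_eq_zero, add_zero,
    CharTwo.add_eq_zero] at key

/-- Join `a, c, b, d` cyclically by `A, B, C, D`, and the opposite pairs by `E₁ + E₂` through `q`
and by `F₁ + F₂` through `q'`. -/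
lemma rayParity_add_rayParity_eq_one {A B C D E₁ E₂ F₁ F₂ : Multiset (Pt × Pt)}
    {a b c d q q' : Pt} (hV : InjOn Prod.fst V)
    (hA : IsArc V A a c) (hB : IsArc V B c b) (hC : IsArc V C b d) (hD : IsArc V D d a)
    (hE₁ : IsArc V E₁ a q) (hE₂ : IsArc V E₂ q b) (hF₁ : IsArc V F₁ c q') (hF₂ : IsArc V F₂ q' d)
    (hAC : Disjoint (chainSupport A) (chainSupport C))
    (hBD : Disjoint (chainSupport B) (chainSupport D))
    (hEF : Disjoint (chainSupport (E₁ + E₂)) (chainSupport (F₁ + F₂)))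
    (hE₁d : Disjoint (chainSupport E₁) (chainSupport (B + C)))
    (hE₂d : Disjoint (chainSupport E₂) (chainSupport (D + A)))
    (hF₁d : Disjoint (chainSupport F₁) (chainSupport (C + D)))
    (hF₂d : Disjoint (chainSupport F₂) (chainSupport (A + B))) (hab : a.1 ≠ b.1) (hac : a.1 ≠ c.1)
    (hbc : b.1 ≠ c.1) :
    rayParity (A + B + C + D) q + rayParity (A + B + C + D) q' = 1 := by
  have hE := hE₁.trans hE₂
  have hF := hF₁.trans hF₂
  have hFE₁ : Disjoint (chainSupport (F₁ + F₂)) (chainSupport E₁) := by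
    rw [chainSupport_add] at hEF; exact (hEF.mono_left subset_union_left).symm
  have hFE₂ : Disjoint (chainSupport (F₁ + F₂)) (chainSupport E₂) := by
    rw [chainSupport_add] at hEF; exact (hEF.mono_left subset_union_right).symm
  have hEF₁ : Disjoint (chainSupport (E₁ + E₂)) (chainSupport F₁) := by
    rw [chainSupport_add F₁] at hEF; exact hEF.mono_right subset_union_left
  have hEF₂ : Disjoint (chainSupport (E₁ + E₂)) (chainSupport F₂) := by
    rw [chainSupport_add F₁] at hEF; exact hEF.mono_right subset_union_right
  have tE₁ := rayParity_eq_of_disjoint hV ((hB.trans hC).trans hF.symm) hE₁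
    (by rw [chainSupport_add]; exact hE₁d.symm.union_left hFE₁)
  have tE₂ := rayParity_eq_of_disjoint hV ((hD.trans hA).trans hF) hE₂
    (by rw [chainSupport_add]; exact hE₂d.symm.union_left hFE₂)
  have tF₁ := rayParity_eq_of_disjoint hV ((hC.trans hD).trans hE) hF₁
    (by rw [chainSupport_add]; exact hF₁d.symm.union_left hEF₁)
  have tF₂ := rayParity_eq_of_disjoint hV ((hA.trans hB).trans hE.symm) hF₂
    (by rw [chainSupport_add]; exact hF₂d.symm.union_left hEF₂)
  have eAC := rayParity_add_rayParity hV hA hC hAC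
  have eBD := rayParity_add_rayParity hV hB hD hBD
  have eEF := rayParity_add_rayParity hV hE hF hEF
  have eab := leftOf_add_leftOf_swap hab
  have eac := leftOf_add_leftOf_swap hac
  have ebc := leftOf_add_leftOf_swap hbc
  simp only [rayParity_add] at tE₁ tE₂ tF₁ tF₂ eEF ⊢
  grind only

end IsArc

end Chain

section Region

open Topology Filter

lemma eq_of_eventually_nhdsNE_eq {X α : Type*} [TopologicalSpace X] [T1Space X]
    [PreconnectedSpace X] [∀ x : X, (𝓝[≠] x).NeBot] {f c : X → α}
    (h : ∀ x, ∀ᶠ y in 𝓝[≠] x, f y = c x) (x y : X) : c x = c y := by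
  refine IsLocallyConstant.apply_eq_of_preconnectedSpace
    ((IsLocallyConstant.iff_eventually_eq c).2 fun x => ?_) x y
  suffices ∀ᶠ y in 𝓝[≠] x, c y = c x by
    filter_upwards [eventually_nhdsWithin_iff.1 this] with y hy
    rcases eq_or_ne y x with rfl | hne
    · rfl
    · exact hy hne
  filter_upwards [eventually_eventually_nhdsWithin.2 (h x), self_mem_nhdsWithin] with y hy hne
  rw [isOpen_compl_singleton.nhdsWithin_eq hne] at hy
  obtain ⟨z, hzx, hzy⟩ := ((hy.filter_mono nhdsWithin_le_nhds).and (h y)).exists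
  rw [← hzx, hzy]

variable {K A B U : Set Pt} {s t z : Pt}

lemma mem_interior_of_notMem_frontier (hzK : z ∈ K) (hz : z ∉ frontier K) : z ∈ interior K :=
  not_not.1 fun h => hz ⟨subset_closure hzK, h⟩

lemma subset_interior_or_subset_compl (hK : IsClosed K) (hA : IsPreconnected A)
    (hAK : Disjoint A (frontier K)) : A ⊆ interior K ∨ A ⊆ Kᶜ :=
  hA.subset_or_subset isOpen_interior hK.isOpen_compl
    (disjoint_compl_right.mono_left interior_subset) fun z hz => (em (z ∈ K)).imp_left fun hzK =>
      mem_interior_of_notMem_frontier hzK (disjoint_left.1 hAK hz)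

lemma subset_interior_and_subset_compl_or (hK : closure (interior K) = K) (hU : U ∈ 𝓝 z)
    (hz : z ∈ frontier K) (hA : IsPreconnected A) (hB : IsPreconnected B)
    (hAK : Disjoint A (frontier K)) (hBK : Disjoint B (frontier K))
    (hUAB : U \ frontier K ⊆ A ∪ B) :
    A ⊆ interior K ∧ B ⊆ Kᶜ ∨ A ⊆ Kᶜ ∧ B ⊆ interior K := by
  have hKc : IsClosed K := hK ▸ isClosed_closure
  rcases subset_interior_or_subset_compl hKc hA hAK with hA' | hA' <;>
    rcases subset_interior_or_subset_compl hKc hB hBK with hB' | hB'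
  · have hUK : U ⊆ K := fun w hw => by
      by_cases hwK : w ∈ frontier K
      · exact hKc.frontier_subset hwK
      · exact interior_subset (union_subset hA' hB' (hUAB ⟨hw, hwK⟩))
    exact (hz.2 (mem_interior_iff_mem_nhds.2 (mem_of_superset hU hUK))).elim
  · exact Or.inl ⟨hA', hB'⟩
  · exact Or.inr ⟨hA', hB'⟩
  · have hzK : z ∈ closure (interior K) := by rw [hK]; exact hKc.frontier_subset hz
    obtain ⟨w, hwU, hw⟩ := mem_closure_iff_nhds.1 hzK U hU
    exact (union_subset hA' hB' (hUAB ⟨hwU, fun h => h.2 hw⟩) (interior_subset hw)).elim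

lemma height_eq_slope_mul_add (s t : Pt) (x : ℝ) : height s t x =
    (t.2 - s.2) / (t.1 - s.1) * x + (s.2 - (t.2 - s.2) / (t.1 - s.1) * s.1) := by
  unfold height; ring

lemma convex_lt_height (s t : Pt) : Convex ℝ {w : Pt | w.2 < height s t w.1} := by
  have hlin := (LinearMap.snd ℝ ℝ ℝ - ((t.2 - s.2) / (t.1 - s.1)) • LinearMap.fst ℝ ℝ ℝ).isLinear
  simpa [height_eq_slope_mul_add, sub_lt_iff_lt_add'] using convex_halfSpace_lt hlin _

lemma convex_height_lt (s t : Pt) : Convex ℝ {w : Pt | height s t w.1 < w.2} := by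
  have hlin := (LinearMap.snd ℝ ℝ ℝ - ((t.2 - s.2) / (t.1 - s.1)) • LinearMap.fst ℝ ℝ ℝ).isLinear
  simpa [height_eq_slope_mul_add, lt_sub_iff_add_lt'] using convex_halfSpace_gt hlin _

lemma tendsto_mk_nhds (z : Pt) : Tendsto (fun y => (z.1, y)) (𝓝 z.2) (𝓝 z) :=
  (Continuous.prodMk_right z.1).tendsto z.2

lemma eventually_crossing_eq (hz : z ∉ seg s t) :
    ∀ᶠ y in 𝓝 z.2, crossing s t (z.1, y) = crossing s t z := by
  by_cases hx : z.1 ∈ uIoo s.1 t.1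
  · have hst : s.1 ≠ t.1 := by rintro h; simp [h] at hx
    have hzy : z.2 ≠ height s t z.1 := fun h =>
      hz ((mem_seg_iff_height hst).2 ⟨uIoo_subset_uIcc_self hx, h⟩)
    rcases hzy.lt_or_gt with h | h
    · filter_upwards [Iio_mem_nhds h] with y hy
      simp [crossing, hx, h, mem_Iio.1 hy]
    · filter_upwards [Ioi_mem_nhds h] with y hy
      simp [crossing, h.not_gt, (mem_Ioi.1 hy).not_gt]
  · simp [crossing, hx]

lemma eventually_indicator_eq (hK : IsClosed K) (hz : z ∉ frontier K) :
    ∀ᶠ w in 𝓝 z, K.indicator (1 : Pt → ZMod 2) w = K.indicator 1 z := by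
  by_cases hzK : z ∈ K
  · have hzi := mem_interior_of_notMem_frontier hzK hz
    filter_upwards [mem_interior_iff_mem_nhds.1 hzi] with w hw
    simp [hw, hzK]
  · filter_upwards [hK.isOpen_compl.mem_nhds hzK] with w hw
    rw [indicator_of_notMem hw, indicator_of_notMem hzK]

lemma eventually_mem_iff_lt_or_gt (hK : closure (interior K) = K) (hx : z.1 ∈ uIoo s.1 t.1)
    (hz : z ∈ seg s t) (hloc : ∀ᶠ w in 𝓝 z, w ∈ frontier K ↔ w ∈ seg s t) :
    (∀ᶠ y in 𝓝[≠] z.2, (z.1, y) ∈ K ↔ y < z.2) ∨ ∀ᶠ y in 𝓝[≠] z.2, (z.1, y) ∈ K ↔ z.2 < y := by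
  have hst : s.1 ≠ t.1 := by rintro h; simp [h] at hx
  have hzy : z.2 = height s t z.1 := ((mem_seg_iff_height hst).1 hz).2
  have hxU : ∀ᶠ w : Pt in 𝓝 z, w.1 ∈ uIoo s.1 t.1 :=
    continuous_fst.continuousAt.eventually_mem (isOpen_Ioo.mem_nhds hx)
  obtain ⟨ε, hε, hU⟩ := Metric.eventually_nhds_iff_ball.1 (hloc.and hxU)
  have hUf {w : Pt} (hw : w ∈ Metric.ball z ε) : w ∈ frontier K ↔ w.2 = height s t w.1 := by
    rw [(hU w hw).1, mem_seg_iff_height hst, and_iff_right (uIoo_subset_uIcc_self (hU w hw).2)]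
  have hsides := subset_interior_and_subset_compl_or hK (Metric.ball_mem_nhds z hε)
    (hloc.self_of_nhds.2 hz)
    ((convex_ball z ε).inter (convex_lt_height s t)).isPreconnected
    ((convex_ball z ε).inter (convex_height_lt s t)).isPreconnected
    (disjoint_left.2 fun w hw h => hw.2.ne ((hUf hw.1).1 h))
    (disjoint_left.2 fun w hw h => hw.2.ne' ((hUf hw.1).1 h))
    fun w hw => (lt_or_gt_of_ne fun h => hw.2 ((hUf hw.1).2 h)).imp (⟨hw.1, ·⟩) (⟨hw.1, ·⟩)
  have hnear : ∀ᶠ y in 𝓝[≠] z.2, (z.1, y) ∈ Metric.ball z ε ∧ y ≠ z.2 :=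
    (((tendsto_mk_nhds z).eventually (Metric.ball_mem_nhds z hε)).filter_mono
      nhdsWithin_le_nhds).and self_mem_nhdsWithin
  refine hsides.imp (fun ⟨hbelow, habove⟩ => hnear.mono fun y ⟨hyU, hyz⟩ => ?_)
    fun ⟨hbelow, habove⟩ => hnear.mono fun y ⟨hyU, hyz⟩ => ?_
  · exact ⟨fun hyK => hyz.lt_or_gt.resolve_right fun hy => habove ⟨hyU, hzy.symm.trans_lt hy⟩ hyK,
      fun hy => interior_subset (hbelow ⟨hyU, hy.trans_eq hzy⟩)⟩
  · exact ⟨fun hyK => hyz.lt_or_gt.resolve_left fun hy => hbelow ⟨hyU, hy.trans_eq hzy⟩ hyK,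
      fun hy => interior_subset (habove ⟨hyU, hzy.symm.trans_lt hy⟩)⟩

/-- Passing through an edge of the boundary flips both the membership in `K` and the ray
crossing. -/
lemma exists_eventually_indicator_add_crossing_eq (hK : closure (interior K) = K)
    (hx : z.1 ∈ uIoo s.1 t.1) (hz : z ∈ seg s t)
    (hloc : ∀ᶠ w in 𝓝 z, w ∈ frontier K ↔ w ∈ seg s t) :
    ∃ c, ∀ᶠ y in 𝓝[≠] z.2, K.indicator 1 (z.1, y) + crossing s t (z.1, y) = c := by
  have hst : s.1 ≠ t.1 := by rintro h; simp [h] at hx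
  have hzy : z.2 = height s t z.1 := ((mem_seg_iff_height hst).1 hz).2
  rcases eventually_mem_iff_lt_or_gt hK hx hz hloc with h | h
  · refine ⟨0, h.mono fun y hy => ?_⟩
    by_cases hlt : y < z.2 <;>
      simp [crossing, indicator, hx, hy, ← hzy, hlt, CharTwo.add_self_eq_zero]
  · refine ⟨1, (h.and self_mem_nhdsWithin).mono fun y ⟨hy, hyz⟩ => ?_⟩
    rcases (show y ≠ z.2 from hyz).lt_or_gt with hlt | hlt <;>
      simp [crossing, indicator, hx, hy, ← hzy, hlt, hlt.not_gt]

end Region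

section Polygon

open Topology Filter

variable {n : ℕ} [NeZero n] {p : Fin n → Pt} {K : Set Pt} {z : Pt}

/-- The boundary edges of the polygon `p` with index in `S`, oriented as in `p`. -/
def edgeChain (p : Fin n → Pt) (S : Finset (Fin n)) : Multiset (Pt × Pt) :=
  S.val.map fun i => (p i, p (i + 1))

lemma rayParity_edgeChain (p : Fin n → Pt) (S : Finset (Fin n)) (z : Pt) :
    rayParity (edgeChain p S) z = ∑ i ∈ S, crossing (p i) (p (i + 1)) z := by
  rw [rayParity, edgeChain, Multiset.map_map]
  rfl

lemma IsSimplePolygon.notMem_edgeSeg (hP : IsSimplePolygon p) (hz : ∀ i, z ≠ p i)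
    {i j : Fin n} (hij : i ≠ j) (hi : z ∈ edgeSeg p i) : z ∉ edgeSeg p j := fun hj =>
  (hP.2.2 i j hij ⟨hi, hj⟩).1.elim (hz i) (hz (i + 1))

lemma IsSimplePolygon.eventually_mem_frontier_iff (hP : IsSimplePolygon p) (hK : IsRegionOf p K)
    (hz : ∀ i, z ≠ p i) {i : Fin n} (hi : z ∈ edgeSeg p i) :
    ∀ᶠ w in 𝓝 z, w ∈ frontier K ↔ w ∈ edgeSeg p i := by
  have hfar : ∀ᶠ w in 𝓝 z, ∀ j, i ≠ j → w ∉ edgeSeg p j :=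
    eventually_all.2 fun j => eventually_imp_distrib_left.2 fun hij =>
      (isClosed_seg _ _).isOpen_compl.mem_nhds (hP.notMem_edgeSeg hz hij hi)
  filter_upwards [hfar] with w hw
  rw [hK.2.2, mem_iUnion]
  exact ⟨fun ⟨j, hj⟩ => by rwa [not_not.1 fun hij => hw j hij hj], fun h => ⟨i, h⟩⟩

lemma IsRegionOf.edgeSeg_subset (hK : IsRegionOf p K) (i : Fin n) : edgeSeg p i ⊆ K :=
  (subset_iUnion _ i).trans (hK.2.2 ▸ hK.1.isClosed.frontier_subset)

lemma IsRegionOf.eventually_indicator_add_rayParity_eq (hK : IsRegionOf p K)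
    (hz : z ∉ frontier K) :
    ∀ᶠ y in 𝓝 z.2, K.indicator 1 (z.1, y) + rayParity (edgeChain p Finset.univ) (z.1, y) =
      K.indicator 1 z + rayParity (edgeChain p Finset.univ) z := by
  have hedge : ∀ᶠ y in 𝓝 z.2, ∀ i,
      crossing (p i) (p (i + 1)) (z.1, y) = crossing (p i) (p (i + 1)) z :=
    eventually_all.2 fun i => eventually_crossing_eq fun hi =>
      hz (hK.2.2 ▸ mem_iUnion_of_mem i hi)
  filter_upwards [(tendsto_mk_nhds z).eventually (eventually_indicator_eq hK.1.isClosed hz), hedge]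
    with y hy hy'
  rw [hy, rayParity_edgeChain, rayParity_edgeChain, Finset.sum_congr rfl fun i _ => hy' i]

lemma IsSimplePolygon.exists_eventually_indicator_add_rayParity_eq (hP : IsSimplePolygon p)
    (hK : IsRegionOf p K) (hz : ∀ i, z.1 ≠ (p i).1) :
    ∃ c, ∀ᶠ y in 𝓝[≠] z.2,
      K.indicator 1 (z.1, y) + rayParity (edgeChain p Finset.univ) (z.1, y) = c := by
  by_cases hzK : z ∈ frontier K
  · obtain ⟨i, hi⟩ := mem_iUnion.1 (hK.2.2 ▸ hzK)
    have hzp : ∀ i, z ≠ p i := fun i h => hz i (h ▸ rfl)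
    obtain ⟨c, hc⟩ := exists_eventually_indicator_add_crossing_eq hK.2.1
      (mem_uIoo_of_mem_seg hi (hz _) (hz _)) hi (hP.eventually_mem_frontier_iff hK hzp hi)
    have hrest : ∀ᶠ y in 𝓝 z.2, ∀ j, j ≠ i →
        crossing (p j) (p (j + 1)) (z.1, y) = crossing (p j) (p (j + 1)) z :=
      eventually_all.2 fun j => eventually_imp_distrib_left.2 fun hji =>
        eventually_crossing_eq (hP.notMem_edgeSeg hzp hji.symm hi)
    refine ⟨c + ∑ j ∈ Finset.univ.erase i, crossing (p j) (p (j + 1)) z, ?_⟩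
    filter_upwards [hc, hrest.filter_mono nhdsWithin_le_nhds] with y hy hy'
    rw [rayParity_edgeChain, ← hy, ← Finset.add_sum_erase _ _ (Finset.mem_univ i), add_assoc,
      Finset.sum_congr rfl fun j hj => hy' j (Finset.ne_of_mem_erase hj)]
  · exact ⟨_, (hK.eventually_indicator_add_rayParity_eq hzK).filter_mono nhdsWithin_le_nhds⟩

lemma IsRegionOf.exists_indicator_add_rayParity_eq_zero (hK : IsRegionOf p K) (x : ℝ) :
    ∃ y, (x, y) ∉ K ∧ K.indicator 1 (x, y) + rayParity (edgeChain p Finset.univ) (x, y) = 0 := by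
  obtain ⟨M, hM⟩ := (hK.1.image continuous_snd).bddAbove
  have hlt {w : Pt} (hw : w ∈ K) : w.2 < M + 1 :=
    (hM (mem_image_of_mem _ hw)).trans_lt (lt_add_one M)
  have hxK : (x, M + 1) ∉ K := fun h => (hlt h).false
  refine ⟨M + 1, hxK, ?_⟩
  rw [indicator_of_notMem hxK, zero_add, rayParity_edgeChain]
  refine Finset.sum_eq_zero fun i _ => if_neg fun ⟨hx, hy⟩ => ?_
  have hne : (p i).1 ≠ (p (i + 1)).1 := by rintro h; simp [h] at hx
  exact hy.not_gt (hlt (hK.edgeSeg_subset i (mk_height_mem_seg hne (uIoo_subset_uIcc_self hx))))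

lemma IsSimplePolygon.rayParity_eq_one_of_mem_interior (hP : IsSimplePolygon p)
    (hK : IsRegionOf p K) (hzK : z ∈ interior K) (hz : ∀ i, z.1 ≠ (p i).1) :
    rayParity (edgeChain p Finset.univ) z = 1 := by
  choose c hc using fun y => hP.exists_eventually_indicator_add_rayParity_eq hK (z := (z.1, y)) hz
  have hval {y : ℝ} (hy : (z.1, y) ∉ frontier K) :
      K.indicator 1 (z.1, y) + rayParity (edgeChain p Finset.univ) (z.1, y) = c y := by
    obtain ⟨w, hw, hw'⟩ := ((hc y).and ((hK.eventually_indicator_add_rayParity_eq hy).filter_mono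
      nhdsWithin_le_nhds)).exists
    rw [← hw, ← hw']
  obtain ⟨y, hyK, hy⟩ := hK.exists_indicator_add_rayParity_eq_zero z.1
  have hcc : c z.2 = c y := eq_of_eventually_nhdsNE_eq
    (f := fun y => K.indicator 1 (z.1, y) + rayParity (edgeChain p Finset.univ) (z.1, y)) hc _ _
  have hzero := (hval fun h => h.2 hzK).trans <| hcc.trans <|
    (hval fun h => hyK (hK.1.isClosed.frontier_subset h)).symm.trans hy
  rw [indicator_of_mem (interior_subset hzK), Pi.one_apply, CharTwo.add_eq_zero] at hzero
  exact hzero.symm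

lemma edgeChain_union (p : Fin n → Pt) {S T : Finset (Fin n)} (h : Disjoint S T) :
    edgeChain p (S ∪ T) = edgeChain p S + edgeChain p T := by
  rw [← Finset.disjUnion_eq_union S T h, edgeChain, Finset.disjUnion_val, Multiset.map_add]
  rfl

lemma edgeChain_Ico_add_compl {a b c d : Fin n} (hac : a ≤ c) (hcb : c ≤ b) (hbd : b ≤ d) :
    edgeChain p (Finset.Ico a c) + edgeChain p (Finset.Ico c b) + edgeChain p (Finset.Ico b d) +
      edgeChain p (Finset.Ico a d)ᶜ = edgeChain p Finset.univ := by
  rw [← edgeChain_union p (Finset.Ico_disjoint_Ico_consecutive a c b),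
    Finset.Ico_union_Ico_eq_Ico hac hcb,
    ← edgeChain_union p (Finset.Ico_disjoint_Ico_consecutive a b d),
    Finset.Ico_union_Ico_eq_Ico (hac.trans hcb) hbd, ← edgeChain_union p disjoint_compl_right,
    Finset.union_compl]

lemma mem_chainSupport_edgeChain {S : Finset (Fin n)} :
    z ∈ chainSupport (edgeChain p S) ↔ ∃ i ∈ S, z ∈ edgeSeg p i := by
  simp [chainSupport, edgeChain, edgeSeg]

lemma val_add_one_eq_ite (i : Fin n) :
    (i + 1).val = if i.val + 1 = n then 0 else i.val + 1 := by
  split_ifs with h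
  · rw [Fin.val_add, Fin.val_one', Nat.add_mod_mod, h, Nat.mod_self]
  · exact Fin.val_add_one_of_lt' (by omega)

lemma add_one_ne_self (hn : 3 ≤ n) (i : Fin n) : i + 1 ≠ i := fun h => by
  have := congrArg Fin.val h
  rw [val_add_one_eq_ite] at this
  split_ifs at this <;> omega

lemma sum_Ico_add_add_one {a b : Fin n} (hab : a ≤ b) (h : Fin n → ZMod 2) :
    ∑ i ∈ Finset.Ico a b, (h i + h (i + 1)) = h a + h b := by
  obtain ⟨n, rfl⟩ := Nat.exists_eq_succ_of_ne_zero (NeZero.ne n)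
  induction b using Fin.induction with
  | zero => simp [le_antisymm hab (Fin.zero_le a), CharTwo.add_self_eq_zero]
  | succ k ih =>
    rcases hab.eq_or_lt with rfl | hlt
    · simp [CharTwo.add_self_eq_zero]
    have hak : a ≤ k.castSucc := Fin.le_castSucc_iff.2 hlt
    have hIco : Finset.Ico a k.succ = insert k.castSucc (Finset.Ico a k.castSucc) := by
      ext i
      simp only [Finset.mem_insert, Finset.mem_Ico, Fin.ext_iff, Fin.le_def, Fin.lt_def,
        Fin.val_succ, Fin.val_castSucc] at hak ⊢
      omega
    rw [hIco, Finset.sum_insert (by simp), ih hak, Fin.coeSucc_eq_succ]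
    linear_combination CharTwo.add_self_eq_zero (h k.castSucc)

lemma sum_compl_Ico_add_add_one {a b : Fin n} (hab : a ≤ b) (h : Fin n → ZMod 2) :
    ∑ i ∈ (Finset.Ico a b)ᶜ, (h i + h (i + 1)) = h b + h a := by
  have htotal : ∑ i : Fin n, (h i + h (i + 1)) = 0 := by
    have hshift : ∑ i : Fin n, h (i + 1) = ∑ i, h i := Equiv.sum_comp (Equiv.addRight 1) h
    rw [Finset.sum_add_distrib, hshift, CharTwo.add_self_eq_zero]
  rw [← Finset.sum_add_sum_compl (Finset.Ico a b), sum_Ico_add_add_one hab,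
    CharTwo.add_eq_zero] at htotal
  rw [← htotal, add_comm]

lemma IsSimplePolygon.isArc_edgeChain (hP : IsSimplePolygon p) {V : Set Pt} (hV : range p ⊆ V)
    {S : Finset (Fin n)} {a b : Fin n}
    (hS : ∀ h : Fin n → ZMod 2, ∑ i ∈ S, (h i + h (i + 1)) = h a + h b) :
    IsArc V (edgeChain p S) (p a) (p b) where
  fst_mem e he := by
    obtain ⟨i, -, rfl⟩ := Multiset.mem_map.1 he
    exact hV (mem_range_self i)
  snd_mem e he := by
    obtain ⟨i, -, rfl⟩ := Multiset.mem_map.1 he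
    exact hV (mem_range_self (i + 1))
  fst_ne_snd e he := by
    obtain ⟨i, -, rfl⟩ := Multiset.mem_map.1 he
    exact hP.2.1.ne (add_one_ne_self hP.1 i).symm
  sum_boundary g := by
    rw [edgeChain, Multiset.map_map]
    exact hS fun i => g (p i)

lemma IsSimplePolygon.disjoint_edgeChain (hP : IsSimplePolygon p) {S T : Finset (Fin n)}
    (h : ∀ i ∈ S, ∀ j ∈ T, i ≠ j ∧ ¬ adjV i j) :
    Disjoint (chainSupport (edgeChain p S)) (chainSupport (edgeChain p T)) := by
  refine disjoint_left.2 fun z hzS hzT => ?_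
  obtain ⟨i, hi, hzi⟩ := mem_chainSupport_edgeChain.1 hzS
  obtain ⟨j, hj, hzj⟩ := mem_chainSupport_edgeChain.1 hzT
  obtain ⟨hij, hadj⟩ := h i hi j hj
  obtain ⟨rfl | rfl, hz | hz⟩ := hP.2.2 i j hij ⟨hzi, hzj⟩
  · exact hij (hP.2.1 hz)
  · exact hadj (Or.inr (hP.2.1 hz))
  · exact hadj (Or.inl (hP.2.1 hz).symm)
  · exact hij (add_right_cancel (hP.2.1 hz))

/-- A chord of the region `K` bounded by `p`: the segment joining two vertices stays in `K` and
meets the boundary only at its ends. -/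
structure IsChord (p : Fin n → Pt) (K : Set Pt) (a b : Fin n) : Prop where
  subset : seg (p a) (p b) ⊆ K
  visible : Visible p a b

variable {a b c d : Fin n} {q : Pt}

lemma IsChord.symm (h : IsChord p K a b) : IsChord p K b a where
  subset := seg_comm (p a) (p b) ▸ h.subset
  visible i := by
    rw [seg_comm, pair_comm]
    exact h.visible i

lemma IsChord.mem_interior (hK : IsRegionOf p K) (h : IsChord p K a b)
    (hq : q ∈ seg (p a) (p b)) (hqp : ∀ i, q ≠ p i) : q ∈ interior K := by
  refine mem_interior_of_notMem_frontier (h.subset hq) fun hqK => ?_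
  obtain ⟨i, hi⟩ := mem_iUnion.1 (hK.2.2 ▸ hqK)
  exact (h.visible i ⟨hq, hi⟩).1.elim (hqp a) (hqp b)

lemma right_notMem_seg {s t : Pt} (hq : q ∈ seg s t) (hqt : q ≠ t) : t ∉ seg s q := fun ht =>
  hqt <| ((mem_segment_iff_wbtw.1 ht).swap_right_iff.1 (mem_segment_iff_wbtw.1 hq)).symm

lemma IsChord.disjoint_edgeChain (hp : Injective p) (h : IsChord p K a b)
    (hq : q ∈ seg (p a) (p b)) (hqb : q ≠ p b) {S T : Finset (Fin n)}
    (hST : ∀ i, i ∈ S ∨ i ∈ T → i ≠ a ∧ i + 1 ≠ a) :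
    Disjoint (chainSupport {(p a, q)}) (chainSupport (edgeChain p S + edgeChain p T)) := by
  rw [chainSupport_singleton, chainSupport_add]
  refine disjoint_left.2 fun z hz hzST => ?_
  obtain ⟨i, hi, hzi⟩ : ∃ i, (i ∈ S ∨ i ∈ T) ∧ z ∈ edgeSeg p i := by
    simpa only [mem_union, mem_chainSupport_edgeChain, or_and_right, exists_or] using hzST
  have hzab : z ∈ seg (p a) (p b) :=
    (convex_segment _ _).segment_subset (left_mem_segment ℝ _ _) hq hz
  obtain ⟨rfl | rfl, hzp⟩ := h.visible i ⟨hzab, hzi⟩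
  · exact hzp.elim (fun e => (hST i hi).1 (hp e).symm) fun e => (hST i hi).2 (hp e).symm
  · exact right_notMem_seg hq hqb hz

lemma exists_mem_seg_fst_notMem {s t : Pt} (h : s.1 ≠ t.1) {F : Set ℝ} (hF : F.Finite) :
    ∃ q ∈ seg s t, q.1 ∉ F := by
  have hinf : (Prod.fst '' seg s t).Infinite := by
    rw [image_fst_seg]
    exact Icc_infinite (inf_lt_sup.2 h)
  obtain ⟨-, ⟨q, hq, rfl⟩, hqF⟩ := hinf.exists_notMem_finite hF
  exact ⟨q, hq, hqF⟩

lemma chainSupport_halves_subset {s t : Pt} (hq : q ∈ seg s t) :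
    chainSupport ({(s, q)} + {(t, q)}) ⊆ seg s t := by
  rw [chainSupport_add, chainSupport_singleton, chainSupport_singleton]
  exact union_subset ((convex_segment _ _).segment_subset (left_mem_segment ℝ _ _) hq)
    ((convex_segment _ _).segment_subset (right_mem_segment ℝ _ _) hq)

lemma IsSimplePolygon.rayParity_add_rayParity_eq_one (hP : IsSimplePolygon p)
    (hp : Injective fun i => (p i).1) (hab : IsChord p K a b) (hcd : IsChord p K c d)
    (hac : a < c) (hcb : c < b) (hbd : b < d)
    (hdisj : Disjoint (seg (p a) (p b)) (seg (p c) (p d))) {q q' : Pt}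
    (hq : q ∈ seg (p a) (p b)) (hq' : q' ∈ seg (p c) (p d)) (hqp : ∀ i, q.1 ≠ (p i).1)
    (hqp' : ∀ i, q'.1 ≠ (p i).1) (hqq' : q.1 ≠ q'.1) :
    rayParity (edgeChain p Finset.univ) q + rayParity (edgeChain p Finset.univ) q' = 1 := by
  set V := insert q (insert q' (range p))
  have hV : InjOn Prod.fst V := by
    refine injOn_insert_of_notMem_image (injOn_insert_of_notMem_image hp.injOn_range ?_) ?_
    · rintro ⟨-, ⟨i, rfl⟩, h⟩
      exact hqp' i h.symm
    · rintro ⟨x, hx | ⟨i, rfl⟩, h⟩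
      · exact hqq' (hx ▸ h.symm)
      · exact hqp i h.symm
  have hpV : range p ⊆ V := (subset_insert _ _).trans (subset_insert _ _)
  have hne {x : Pt} (hx : ∀ i, x.1 ≠ (p i).1) (i : Fin n) : x ≠ p i := fun h => hx i (h ▸ rfl)
  have harc {x : Pt} (hxV : x ∈ V) (hx : ∀ i, x.1 ≠ (p i).1) (i : Fin n) :
      IsArc V {(p i, x)} (p i) x := .single (hpV (mem_range_self i)) hxV (hne hx i).symm
  have hqV : q ∈ V := mem_insert _ _
  have hqV' : q' ∈ V := mem_insert_of_mem _ (mem_insert _ _)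
  have hsucc := val_add_one_eq_ite (n := n)
  rw [← edgeChain_Ico_add_compl hac.le hcb.le hbd.le]
  refine IsArc.rayParity_add_rayParity_eq_one hV
    (hP.isArc_edgeChain hpV (sum_Ico_add_add_one hac.le))
    (hP.isArc_edgeChain hpV (sum_Ico_add_add_one hcb.le))
    (hP.isArc_edgeChain hpV (sum_Ico_add_add_one hbd.le))
    (hP.isArc_edgeChain hpV (sum_compl_Ico_add_add_one (hac.trans (hcb.trans hbd)).le))
    (harc hqV hqp a) (harc hqV hqp b).symm (harc hqV' hqp' c) (harc hqV' hqp' d).symm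
    (hP.disjoint_edgeChain ?_) (hP.disjoint_edgeChain ?_)
    (hdisj.mono (chainSupport_halves_subset hq) (chainSupport_halves_subset hq'))
    (hab.disjoint_edgeChain hP.2.1 hq (hne hqp b) ?_)
    (hab.symm.disjoint_edgeChain hP.2.1 (seg_comm _ _ ▸ hq) (hne hqp a) ?_)
    (hcd.disjoint_edgeChain hP.2.1 hq' (hne hqp' d) ?_)
    (hcd.symm.disjoint_edgeChain hP.2.1 (seg_comm _ _ ▸ hq') (hne hqp' c) ?_)
    (hp.ne (hac.trans hcb).ne) (hp.ne hac.ne) (hp.ne hcb.ne')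
  all_goals
    simp only [Finset.mem_Ico, Finset.mem_compl, adjV, Fin.ext_iff, Fin.le_def, Fin.lt_def, ne_eq,
      hsucc] at hac hcb hbd ⊢
    grind

lemma IsSimplePolygon.not_disjoint_seg_of_injective_fst (hP : IsSimplePolygon p)
    (hK : IsRegionOf p K) (hp : Injective fun i => (p i).1) (hab : IsChord p K a b)
    (hcd : IsChord p K c d) (hac : a < c) (hcb : c < b) (hbd : b < d) :
    ¬ Disjoint (seg (p a) (p b)) (seg (p c) (p d)) := by
  intro hdisj
  have hfin : (range fun i => (p i).1).Finite := finite_range _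
  obtain ⟨q, hq, hqF⟩ := exists_mem_seg_fst_notMem (hp.ne (hac.trans hcb).ne) hfin
  obtain ⟨q', hq', hqF'⟩ := exists_mem_seg_fst_notMem (hp.ne (hcb.trans hbd).ne) (hfin.insert q.1)
  obtain ⟨hqq', hqF'⟩ := not_or.1 hqF'
  have hqp (i : Fin n) : q.1 ≠ (p i).1 := fun h => hqF ⟨i, h.symm⟩
  have hqp' (i : Fin n) : q'.1 ≠ (p i).1 := fun h => hqF' ⟨i, h.symm⟩
  have hsum := hP.rayParity_add_rayParity_eq_one hp hab hcd hac hcb hbd hdisj hq hq' hqp hqp'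
    (Ne.symm hqq')
  rw [hP.rayParity_eq_one_of_mem_interior hK (hab.mem_interior hK hq fun i h => hqp i (h ▸ rfl))
      hqp, hP.rayParity_eq_one_of_mem_interior hK
      (hcd.mem_interior hK hq' fun i h => hqp' i (h ▸ rfl)) hqp'] at hsum
  exact absurd hsum (by decide)

lemma exists_injective_fst_comp {ι : Type*} [Finite ι] {p : ι → Pt} (hp : Injective p) :
    ∃ S : Pt ≃L[ℝ] Pt, Injective fun i => (S (p i)).1 := by
  have hfin : (range fun ij : ι × ι =>
      ((p ij.2).1 - (p ij.1).1) / ((p ij.1).2 - (p ij.2).2)).Finite := finite_range _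
  obtain ⟨ε, hε⟩ := hfin.infinite_compl.nonempty
  have hshear : (ε • LinearMap.snd ℝ ℝ ℝ) ((1 : ℝ), (0 : ℝ)) = 0 := by simp
  refine ⟨(LinearEquiv.transvection hshear).toContinuousLinearEquiv, fun i j hij => hp ?_⟩
  have hfst : (p i).1 + ε * (p i).2 = (p j).1 + ε * (p j).2 := by
    simpa [LinearMap.transvection.apply] using hij
  have hsnd : (p i).2 = (p j).2 := by
    by_contra hne
    exact hε ⟨(i, j), (eq_div_of_mul_eq (sub_ne_zero.2 hne) (by linear_combination hfst)).symm⟩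
  exact Prod.ext (by linear_combination hfst - ε * hsnd) hsnd

variable (S : Pt ≃L[ℝ] Pt)

lemma seg_map (s t : Pt) : seg (S s) (S t) = S '' seg s t :=
  (image_segment ℝ S.toLinearMap.toAffineMap s t).symm

lemma edgeSeg_map (p : Fin n → Pt) (i : Fin n) : edgeSeg (S ∘ p) i = S '' edgeSeg p i :=
  seg_map S _ _

lemma IsSimplePolygon.map (hP : IsSimplePolygon p) : IsSimplePolygon (S ∘ p) := by
  refine ⟨hP.1, S.injective.comp hP.2.1, fun i j hij => ?_⟩
  simp only [edgeSeg_map, comp_apply, ← image_pair S, ← image_inter S.injective]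
  exact image_mono (hP.2.2 i j hij)

lemma IsRegionOf.map (hK : IsRegionOf p K) : IsRegionOf (S ∘ p) (S '' K) := by
  refine ⟨hK.1.image S.continuous, ?_, ?_⟩
  · have hint : interior (S '' K) = S '' interior K := (S.toHomeomorph.image_interior K).symm
    rw [hint, ← S.image_closure, hK.2.1]
  · simp only [edgeSeg_map, ← image_iUnion, ← hK.2.2]
    exact (S.toHomeomorph.image_frontier K).symm

lemma IsChord.map (h : IsChord p K a b) : IsChord (S ∘ p) (S '' K) a b where
  subset := seg_map S (p a) (p b) ▸ image_mono h.subset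
  visible i := by
    simp only [edgeSeg_map, comp_apply, seg_map, ← image_pair S, ← image_inter S.injective]
    exact image_mono (h.visible i)

lemma IsSimplePolygon.not_disjoint_seg_of_lt (hP : IsSimplePolygon p) (hK : IsRegionOf p K)
    (hab : IsChord p K a b) (hcd : IsChord p K c d) (hac : a < c) (hcb : c < b) (hbd : b < d) :
    ¬ Disjoint (seg (p a) (p b)) (seg (p c) (p d)) := fun h => by
  obtain ⟨S, hS⟩ := exists_injective_fst_comp hP.2.1
  refine (hP.map S).not_disjoint_seg_of_injective_fst (hK.map S) hS (hab.map S) (hcd.map S) hac hcb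
    hbd ?_
  simpa only [comp_apply, seg_map] using (disjoint_image_iff S.injective).2 h

end Polygon

section CyclicOrder

variable {n : ℕ} [NeZero n] {a i x : Fin n}

lemma sub_one_ne_self (hn : 3 ≤ n) (i : Fin n) : i - 1 ≠ i := fun h =>
  add_one_ne_self hn (i - 1) (by rw [sub_add_cancel, h])

lemma sub_one_ne_add_one (hn : 3 ≤ n) (i : Fin n) : i - 1 ≠ i + 1 := by
  have h := val_add_one_eq_ite (i - 1)
  have h' := val_add_one_eq_ite i
  rw [sub_add_cancel] at h
  rw [ne_eq, Fin.ext_iff]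
  grind

lemma sbtw_add_one (ha : a ≠ i) (ha' : a + 1 ≠ i) : sbtw i a (a + 1) := by
  have := val_add_one_eq_ite a
  simp only [Fin.sbtw_iff, Fin.lt_def, ne_eq, Fin.ext_iff] at *
  grind

lemma sbtw_of_sbtw_add_one (h : sbtw i x (a + 1)) (hxa : x ≠ a) (ha : a ≠ i) : sbtw i x a := by
  have := val_add_one_eq_ite a
  simp only [Fin.sbtw_iff, Fin.lt_def, ne_eq, Fin.ext_iff] at *
  grind

lemma sbtw_swap_of_not_sbtw {α : Type*} [CircularOrder α] {a b c : α} (h : ¬ sbtw a b c)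
    (hab : b ≠ a) (hbc : b ≠ c) (hac : a ≠ c) : sbtw c b a := by
  rw [sbtw_iff_not_btw] at h ⊢
  intro h'
  rcases (not_not.1 h).antisymm h' with h | h | h
  exacts [hbc h.symm, hab h, hac h]

open Fin.NatCast in
lemma forall_of_add_one {Q : Fin n → Prop} (hi : Q i) (hQ : ∀ k, Q k → Q (k + 1)) (k : Fin n) :
    Q k := by
  have hnat (t : ℕ) : Q (i + t) := by
    induction t with
    | zero => simpa using hi
    | succ t ih => simpa [add_assoc] using hQ _ ih
  simpa using hnat (k - i).val

end CyclicOrder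

section Cycle

variable {n m : ℕ} [NeZero n] [NeZero m] {p : Fin n → Pt} {K : Set Pt} {f : Fin m → Fin n}
  {a b c d i u w x y : Fin n} {j k : Fin m}

lemma NC.symm_left {s t u v : Pt} (h : NC s t u v) : NC t s u v := by
  rwa [NC, seg_comm, pair_comm t s]

lemma NC.symm_right {s t u v : Pt} (h : NC s t u v) : NC s t v u := by
  rwa [NC, seg_comm v u, pair_comm v u]

lemma IsSimplePolygon.not_sbtw_of_NC (hP : IsSimplePolygon p) (hK : IsRegionOf p K)
    (hab : IsChord p K a b) (hcd : IsChord p K c d) (hnc : NC (p a) (p b) (p c) (p d))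
    (hacb : sbtw a c b) : ¬ sbtw b d a := fun hbda => by
  have hdisj : Disjoint (seg (p a) (p b)) (seg (p c) (p d)) := by
    refine disjoint_left.2 fun z hz hz' => ?_
    obtain ⟨rfl | rfl, h | h⟩ := hnc ⟨hz, hz'⟩ <;> obtain rfl := hP.2.1 h
    exacts [sbtw_irrefl_left hacb, sbtw_irrefl_right hbda, sbtw_irrefl_right hacb,
      sbtw_irrefl_left hbda]
  have hab' := seg_comm (p a) (p b)
  have hcd' := seg_comm (p c) (p d)
  obtain ⟨hac, hcb, hbd⟩ | ⟨hcb, hbd, hda⟩ | ⟨hbd, hda, hac⟩ | ⟨hda, hac, hcb⟩ :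
      (a < c ∧ c < b ∧ b < d) ∨ (c < b ∧ b < d ∧ d < a) ∨ (b < d ∧ d < a ∧ a < c) ∨
        (d < a ∧ a < c ∧ c < b) := by
    rw [Fin.sbtw_iff] at hacb hbda
    grind
  · exact hP.not_disjoint_seg_of_lt hK hab hcd hac hcb hbd hdisj
  · exact hP.not_disjoint_seg_of_lt hK hcd hab.symm hcb hbd hda (hab' ▸ hdisj.symm)
  · exact hP.not_disjoint_seg_of_lt hK hab.symm hcd.symm hbd hda hac (hab' ▸ hcd' ▸ hdisj)
  · exact hP.not_disjoint_seg_of_lt hK hcd.symm hab hda hac hcb (hcd' ▸ hdisj.symm)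

lemma IsSimplePolygon.sbtw_iff_sbtw_of_NC (hP : IsSimplePolygon p) (hK : IsRegionOf p K)
    (hia : IsChord p K i a) (hxy : IsChord p K x y) (hnc : NC (p i) (p a) (p x) (p y))
    (hai : i ≠ a) (hxi : x ≠ i) (hxa : x ≠ a) (hyi : y ≠ i) (hya : y ≠ a) :
    sbtw i x a ↔ sbtw i y a := by
  constructor <;> intro h <;> by_contra h'
  · exact hP.not_sbtw_of_NC hK hia hxy hnc h (sbtw_swap_of_not_sbtw h' hyi hya hai)
  · exact hP.not_sbtw_of_NC hK hia hxy.symm hnc.symm_right h (sbtw_swap_of_not_sbtw h' hxi hxa hai)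

lemma IsSimplePolygon.sbtw_add_one_of_NC (hP : IsSimplePolygon p) (hK : IsRegionOf p K)
    (hia : IsChord p K i a) (hia' : IsChord p K i (a + 1)) (hxy : IsChord p K x y)
    (hnc : NC (p i) (p a) (p x) (p y)) (hnc' : NC (p i) (p (a + 1)) (p x) (p y))
    (hai : a ≠ i) (hai' : a + 1 ≠ i) (hxi : x ≠ i) (hyi : y ≠ i) (hadj : ¬ adjV x y)
    (hx : sbtw i x (a + 1)) : sbtw i y (a + 1) := by
  have hxa' : x ≠ a + 1 := by
    rintro rfl
    exact sbtw_irrefl_right hx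
  rcases ne_or_eq y (a + 1) with hya' | rfl
  · exact (hP.sbtw_iff_sbtw_of_NC hK hia' hxy hnc' hai'.symm hxi hxa' hyi hya').1 hx
  · have hxa : x ≠ a := fun h => hadj (Or.inl (h ▸ rfl))
    have ha : sbtw i (a + 1) a := (hP.sbtw_iff_sbtw_of_NC hK hia hxy hnc hai.symm hxi hxa hyi
      (add_one_ne_self hP.1 a)).1 (sbtw_of_sbtw_add_one hx hxa hai)
    exact ((sbtw_add_one hai hai').cyclic_left.not_sbtw ha).elim

lemma IsSimplePolygon.sbtw_add_one_iff_of_NC (hP : IsSimplePolygon p) (hK : IsRegionOf p K)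
    (hia : IsChord p K i a) (hia' : IsChord p K i (a + 1)) (hxy : IsChord p K x y)
    (hnc : NC (p i) (p a) (p x) (p y)) (hnc' : NC (p i) (p (a + 1)) (p x) (p y))
    (hai : a ≠ i) (hai' : a + 1 ≠ i) (hxi : x ≠ i) (hyi : y ≠ i) (hadj : ¬ adjV x y) :
    sbtw i x (a + 1) ↔ sbtw i y (a + 1) :=
  ⟨hP.sbtw_add_one_of_NC hK hia hia' hxy hnc hnc' hai hai' hxi hyi hadj,
    hP.sbtw_add_one_of_NC hK hia hia' hxy.symm hnc.symm_right hnc'.symm_right hai hai' hyi hxi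
      fun h => hadj h.symm⟩

lemma IsCycleEmbedding.isChord (hf : IsCycleEmbedding p K f) (k : Fin m) :
    IsChord p K (f k) (f (k + 1)) :=
  ⟨hf.2.2.1 k, hf.2.2.2.2 k⟩

lemma IsCycleEmbedding.neighbor_ne (hf : IsCycleEmbedding p K f) (hm : 3 ≤ m)
    (ha : a = f (j - 1) ∨ a = f (j + 1)) : a ≠ f j := by
  rcases ha with rfl | rfl
  exacts [hf.1.ne (sub_one_ne_self hm j), hf.1.ne (add_one_ne_self hm j)]

lemma IsCycleEmbedding.isChord_neighbor (hf : IsCycleEmbedding p K f)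
    (ha : a = f (j - 1) ∨ a = f (j + 1)) : IsChord p K (f j) a := by
  rcases ha with rfl | rfl
  · simpa using (hf.isChord (j - 1)).symm
  · exact hf.isChord j

lemma IsCycleEmbedding.NC_neighbor (hf : IsCycleEmbedding p K f) (hp : Injective p)
    (ha : a = f (j - 1) ∨ a = f (j + 1)) (hkj : k ≠ j) (hkj' : k + 1 ≠ j) :
    NC (p (f j)) (p a) (p (f k)) (p (f (k + 1))) := by
  have hj : p (f j) ∉ ({p (f k), p (f (k + 1))} : Set Pt) := by
    rintro (h | h)
    exacts [hkj (hf.1 (hp h)).symm, hkj' (hf.1 (hp h)).symm]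
  rcases ha with rfl | rfl
  · have h := hf.2.2.2.1 (j - 1) k
    rw [sub_add_cancel] at h
    exact (h fun h => hj (h ▸ mem_insert_of_mem _ rfl)).symm_left
  · exact hf.2.2.2.1 j k fun h => hj (h ▸ mem_insert _ _)

lemma IsCycleEmbedding.sbtw_iff_sbtw_s8 (hf : IsCycleEmbedding p K f) (hP : IsSimplePolygon p)
    (hK : IsRegionOf p K) (hm : 3 ≤ m) (ha : a = f (j - 1) ∨ a = f (j + 1))
    (ha' : a + 1 = f (j - 1) ∨ a + 1 = f (j + 1)) (hkj : k ≠ j) :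
    sbtw (f j) (f k) (a + 1) ↔ sbtw (f j) (f (j + 1)) (a + 1) := by
  refine (forall_of_add_one (Q := fun k => k = j ∨ (sbtw (f j) (f k) (a + 1) ↔
    sbtw (f j) (f (j + 1)) (a + 1))) (Or.inl rfl) (fun k hk => ?_) k).resolve_left hkj
  rcases eq_or_ne k j with rfl | hkj
  · exact Or.inr Iff.rfl
  refine or_iff_not_imp_left.2 fun hkj' => ?_
  rw [← hk.resolve_left hkj]
  exact (hP.sbtw_add_one_iff_of_NC hK (hf.isChord_neighbor ha) (hf.isChord_neighbor ha')
    (hf.isChord k) (hf.NC_neighbor hP.2.1 ha hkj hkj') (hf.NC_neighbor hP.2.1 ha' hkj hkj')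
    (hf.neighbor_ne hm ha) (hf.neighbor_ne hm ha') (hf.1.ne hkj) (hf.1.ne hkj') (hf.2.1 k)).symm

lemma IsCycleEmbedding.not_neighbor_add_one (hf : IsCycleEmbedding p K f) (hP : IsSimplePolygon p)
    (hK : IsRegionOf p K) (hm : 3 ≤ m) (ha : a = f (j - 1) ∨ a = f (j + 1)) :
    ¬ (a + 1 = f (j - 1) ∨ a + 1 = f (j + 1)) := fun ha' => by
  have hiff {b : Fin n} (hb : b = f (j - 1) ∨ b = f (j + 1)) :
      sbtw (f j) b (a + 1) ↔ sbtw (f j) (f (j + 1)) (a + 1) := by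
    rcases hb with rfl | rfl
    exacts [hf.sbtw_iff_sbtw_s8 hP hK hm ha ha' (sub_one_ne_self hm j), Iff.rfl]
  have hsbtw := sbtw_add_one (hf.neighbor_ne hm ha) (hf.neighbor_ne hm ha')
  exact sbtw_irrefl_right ((hiff ha').2 ((hiff ha).1 hsbtw))

lemma IsCycleEmbedding.not_adjV_neighbors (hf : IsCycleEmbedding p K f) (hP : IsSimplePolygon p)
    (hK : IsRegionOf p K) (hm : 3 ≤ m) (j : Fin m) : ¬ adjV (f (j - 1)) (f (j + 1))
  | Or.inl h => hf.not_neighbor_add_one hP hK hm (Or.inl rfl) (Or.inr h.symm)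
  | Or.inr h => hf.not_neighbor_add_one hP hK hm (Or.inr rfl) (Or.inl h.symm)

lemma IsIsolated.adjV_of_visible (hn : 3 ≤ n) (hi : IsIsolated p i) (hu : Visible p i u)
    (hw : Visible p i w) (hui : u ∉ ({i - 1, i, i + 1} : Set (Fin n)))
    (hwi : w ∉ ({i - 1, i, i + 1} : Set (Fin n))) (huw : u ≠ w) : adjV u w := by
  rcases hi with hlt | ⟨-, hadj⟩
  · have hsub : ({u, w, i - 1, i, i + 1} : Set (Fin n)) ⊆ visSet p i := by
      rintro v (rfl | rfl | hv)
      exacts [Or.inl hu, Or.inl hw, Or.inr hv]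
    have hcard : ({i - 1, i, i + 1} : Set (Fin n)).ncard = 3 :=
      ncard_eq_three.2 ⟨_, _, _, sub_one_ne_self hn i, sub_one_ne_add_one hn i,
        (add_one_ne_self hn i).symm, rfl⟩
    have := ncard_le_ncard hsub
    rw [ncard_insert_of_notMem (by simpa [huw] using hui),
      ncard_insert_of_notMem hwi, hcard] at this
    omega
  · exact hadj u (Or.inl hu) w (Or.inl hw) hui hwi huw

lemma IsCycleEmbedding.neighbor_notMem (hf : IsCycleEmbedding p K f) (hm : 3 ≤ m)
    (ha : a = f (j - 1) ∨ a = f (j + 1)) :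
    a ∉ ({f j - 1, f j, f j + 1} : Set (Fin n)) := by
  have hadj : ¬ adjV a (f j) := by
    rcases ha with rfl | rfl
    · simpa using hf.2.1 (j - 1)
    · exact fun h => hf.2.1 j h.symm
  rintro (h | h | h)
  exacts [hadj (Or.inl (eq_sub_iff_add_eq.1 h).symm), hf.neighbor_ne hm ha h, hadj (Or.inr h)]

end Cycle

/-- An isolated vertex of a simple polygon `P` cannot be the image of any node of a
straight-line planarly polygon-embedded cycle graph in `P`. -/
theorem stmt_8 (n m : ℕ) [NeZero n] [NeZero m] (hm : 3 ≤ m)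
    (p : Fin n → Pt) (hP : IsSimplePolygon p)
    (K : Set Pt) (hK : IsRegionOf p K)
    (i : Fin n) (hiso : IsIsolated p i)
    (f : Fin m → Fin n) (hf : IsCycleEmbedding p K f) :
    ∀ j : Fin m, f j ≠ i := by
  rintro j rfl
  have hpred : f (j - 1) = f (j - 1) ∨ f (j - 1) = f (j + 1) := Or.inl rfl
  have hsucc : f (j + 1) = f (j - 1) ∨ f (j + 1) = f (j + 1) := Or.inr rfl
  refine hf.not_adjV_neighbors hP hK hm j ?_
  exact hiso.adjV_of_visible hP.1 (hf.isChord_neighbor hpred).visible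
    (hf.isChord_neighbor hsucc).visible (hf.neighbor_notMem hm hpred) (hf.neighbor_notMem hm hsucc)
    (hf.1.ne (sub_one_ne_add_one hm j))
end
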